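/- Let I_N denote the number of isomorphism classes of cubic multigraphs on N vertices. Then I_N ∼ (e²/√(πN))·(3N/(4e))^{N/2} as N → ∞ along even N; that is, I_N·√(πN)·(4e/(3N))^{N/2}·e^{-2} → 1 as N → ∞ through even values of N. (For odd N no cubic multigraph exists, since the degree sum 3N must be even.) -/

import Mathlib

open Filter Real Topology

/-- A cubic multigraph on `Fin N`: a symmetric multiplicity function, where `m u u`
counts loops at `u` (each contributing 2 to the degree) and `m u v` (for `u ≠ v`)
counts edges between `u` and `v`, such that every vertex has degree 3. -/
def IsCubic {N : ℕ} (m : Fin N → Fin N → ℕ) : Prop :=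
  (∀ u v, m u v = m v u) ∧ ∀ u, 2 * m u u + ∑ v ∈ Finset.univ.erase u, m u v = 3

/-- Isomorphism of cubic multigraphs: a relabelling of the vertices carrying one
multiplicity function to the other. -/
def CubicIsoRel (N : ℕ) (m m' : {f : Fin N → Fin N → ℕ // IsCubic f}) : Prop :=
  ∃ σ : Equiv.Perm (Fin N), ∀ u v, m'.val (σ u) (σ v) = m.val u v

/-- `I N`: the number of isomorphism classes of cubic multigraphs on `N` vertices. -/
noncomputable def I (N : ℕ) : ℕ := Nat.card (Quot (CubicIsoRel N))

namespace CM
open Equiv Finset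

/-- Fixed-point-free involutions (perfect matchings). -/
def IsM {X : Type*} (f : Perm X) : Prop := (∀ x, f (f x) = x) ∧ ∀ x, f x ≠ x

/-- Number of perfect matchings commuting with `g`. -/
noncomputable def cm {X : Type*} (g : Perm X) : ℕ :=
  Nat.card {f : Perm X // IsM f ∧ ∀ x, f (g x) = g (f x)}

/-- Half edges. -/
abbrev HE (N : ℕ) := Fin N × Fin 3

/-- number of half-edges whose edge has label `z`. -/
def nl {N : ℕ} (f : Perm (HE N)) (z : Sym2 (Fin N)) : ℕ :=
  #{x : HE N | s(x.1, (f x).1) = z}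

theorem even_card_of_invol {X : Type*} [DecidableEq X] (s : Finset X) (f : X → X)
    (h1 : ∀ x ∈ s, f x ∈ s) (h2 : ∀ x ∈ s, f (f x) = x) (h3 : ∀ x ∈ s, f x ≠ x) :
    Even #s := by
  have : ∑ x ∈ s, (1 : ZMod 2) = 0 := by
    refine Finset.sum_involution (fun x _ => f x) ?_ ?_ ?_ ?_
    · intro a ha; decide
    · intro a ha _; exact h3 a ha
    · intro a ha; exact h1 a ha
    · intro a ha; exact h2 a ha
  rw [Finset.sum_const, nsmul_eq_mul, mul_one] at this
  exact (ZMod.natCast_eq_zero_iff_even).1 this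

theorem nl_even {N : ℕ} {f : Perm (HE N)} (hf : IsM f) (z : Sym2 (Fin N)) : Even (nl f z) := by
  refine even_card_of_invol _ f ?_ (fun x _ => hf.1 x) (fun x _ => hf.2 x)
  intro x hx
  simp only [mem_filter, mem_univ, true_and] at hx ⊢
  rw [hf.1, Sym2.eq_swap]; exact hx

/-- The multigraph of a matching. -/
def mg {N : ℕ} (f : Perm (HE N)) (u v : Fin N) : ℕ := nl f s(u, v) / 2

theorem two_mg {N : ℕ} {f : Perm (HE N)} (hf : IsM f) (u v : Fin N) :
    2 * mg f u v = nl f s(u, v) := Nat.two_mul_div_two_of_even (nl_even hf _)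

theorem mg_cubic {N : ℕ} {f : Perm (HE N)} (hf : IsM f) : IsCubic (mg f) := by
  constructor
  · intro u v; unfold mg; rw [Sym2.eq_swap]
  · intro u
    set c : Fin N → ℕ := fun v => #{x : HE N | x.1 = u ∧ (f x).1 = v} with hc
    have h1 : 2 * mg f u u = c u := by
      rw [two_mg hf]; unfold nl; rw [hc]
      congr 1; ext x; simp
    have h2 : ∀ v ∈ univ.erase u, mg f u v = c v := by
      intro v hv
      have hne : v ≠ u := (Finset.mem_erase.1 hv).1
      have h3 : nl f s(u, v) = c v + #{x : HE N | x.1 = v ∧ (f x).1 = u} := by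
        rw [hc]; unfold nl
        rw [← Finset.card_union_of_disjoint]
        · congr 1; ext x; simp
        · rw [Finset.disjoint_filter]; rintro x _ ⟨a, b⟩ ⟨c, d⟩; exact hne (c.symm.trans a)
      have h4 : #{x : HE N | x.1 = v ∧ (f x).1 = u} = c v := by
        rw [hc]
        refine Finset.card_bij (fun x _ => f x) ?_ ?_ ?_
        · intro x hx; simp only [mem_filter, mem_univ, true_and] at hx ⊢
          rw [hf.1]; exact ⟨hx.2, hx.1⟩
        · intro x _ y _ h; exact f.injective h
        · intro y hy; simp only [mem_filter, mem_univ, true_and] at hy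
          refine ⟨f y, ?_, hf.1 y⟩
          simp only [mem_filter, mem_univ, true_and]; rw [hf.1]; exact ⟨hy.2, hy.1⟩
      have := two_mg hf u v
      omega
    rw [h1, Finset.sum_congr rfl h2, Finset.add_sum_erase _ _ (mem_univ u)]
    have : #{x : HE N | x.1 = u} = 3 := by
      have : (Finset.univ.filter (fun x : HE N => x.1 = u)) = ({u} : Finset (Fin N)) ×ˢ univ := by
        ext ⟨a, b⟩; simp [eq_comm]
      rw [this]; simp
    rw [← this]
    rw [Finset.card_eq_sum_card_fiberwise (f := fun x : HE N => (f x).1) (t := univ)]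
    · apply Finset.sum_congr rfl; intro v _; rw [hc]; simp only [Finset.filter_filter]
    · intro x _; simp

/-- A choice of one half-edge in each edge. -/
def hf {N : ℕ} (f : Perm (HE N)) (x : HE N) : Prop :=
  x.1 < (f x).1 ∨ (x.1 = (f x).1 ∧ x.2 < (f x).2)

theorem hf_iff {N : ℕ} {f : Perm (HE N)} (h : IsM f) (x : HE N) : hf f (f x) ↔ ¬ hf f x := by
  unfold hf
  rw [h.1]
  have := h.2 x
  have h' : (f x).1 ≠ x.1 ∨ (f x).2 ≠ x.2 := by
    by_contra hh; push Not at hh; exact this (Prod.ext hh.1 hh.2)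
  constructor
  · rintro (a | ⟨a, b⟩) (c | ⟨c, d⟩) <;> omega
  · intro hh; omega

open Classical in
/-- Splitting of the half-edges. -/
noncomputable def split {N : ℕ} {f : Perm (HE N)} (h : IsM f) : {x // hf f x} × Bool ≃ HE N where
  toFun p := if p.2 then f p.1 else p.1
  invFun x := if hx : hf f x then (⟨x, hx⟩, false) else (⟨f x, (hf_iff h x).2 hx⟩, true)
  left_inv := by
    rintro ⟨⟨x, hx⟩, b⟩
    cases b
    · simp [hx]
    · have : ¬ hf f (f x) := by rw [hf_iff h]; simpa using hx
      simp [this, h.1]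
  right_inv := by
    intro x
    by_cases hx : hf f x
    · simp [hx]
    · simp [hx, h.1]

/-- label -/
def lab {N : ℕ} (f : Perm (HE N)) (x : HE N) : Sym2 (Fin N) := s(x.1, (f x).1)

theorem lab_f {N : ℕ} {f : Perm (HE N)} (h : IsM f) (x : HE N) : lab f (f x) = lab f x := by
  unfold lab; rw [h.1, Sym2.eq_swap]

theorem lab_split {N : ℕ} {f : Perm (HE N)} (h : IsM f) (p) : lab f (split h p) = lab f p.1 := by
  rcases p with ⟨x, b⟩
  cases b
  · simp [split]
  · simp [split, lab_f h]

theorem split_not {N : ℕ} {f : Perm (HE N)} (h : IsM f) (x) (b : Bool) :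
    f (split h (x, b)) = split h (x, !b) := by
  cases b <;> simp [split, h.1]

theorem card_half {N : ℕ} {f : Perm (HE N)} (h : IsM f) (z) :
    Nat.card {x : {x // hf f x} // lab f x = z} * 2 = nl f z := by
  have : nl f z = Nat.card {x : HE N // lab f x = z} := by
    rw [Nat.card_eq_fintype_card, Fintype.card_subtype]; rfl
  rw [this]
  have e1 : {p : {x // hf f x} × Bool // lab f p.1 = z} ≃ {x : HE N // lab f x = z} :=
    (split h).subtypeEquiv (fun p => by rw [lab_split])
  have e2 : {p : {x // hf f x} × Bool // lab f p.1 = z} ≃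
      {x : {x // hf f x} // lab f x = z} × Bool :=
    { toFun := fun p => (⟨p.1.1, p.2⟩, p.1.2)
      invFun := fun p => ⟨(p.1.1, p.2), p.1.2⟩
      left_inv := fun p => rfl
      right_inv := fun p => rfl }
  rw [← Nat.card_congr e1, Nat.card_congr e2, Nat.card_prod]; simp

theorem exists_iso {N : ℕ} {f f' : Perm (HE N)} (h : IsM f) (h' : IsM f')
    (hn : ∀ z, nl f z = nl f' z) :
    ∃ g : Perm (HE N), (∀ x, (g x).1 = x.1) ∧ ∀ x, g (f x) = f' (g x) := by
  have e : ∀ z, Nonempty ({x : {x // hf f x} // lab f x = z} ≃ {x : {x // hf f' x} // lab f' x = z}) := by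
    intro z
    have h1 := card_half h z
    have h2 := card_half h' z
    rw [hn, ← h2] at h1
    exact Finite.card_eq.1 (by omega)
  replace e := fun z => (e z).some
  let β : {x // hf f x} ≃ {x // hf f' x} :=
    (Equiv.sigmaFiberEquiv (fun x : {x // hf f x} => lab f x)).symm.trans
      ((Equiv.sigmaCongrRight e).trans
        (Equiv.sigmaFiberEquiv (fun x : {x // hf f' x} => lab f' x)))
  have hβ : ∀ x, lab f' (β x) = lab f x := by
    intro x
    exact (e (lab f x) ⟨x, rfl⟩).2
  have hβ1 : ∀ x, (β x).1.1 = x.1.1 ∧ (f' (β x).1).1 = (f x.1).1 := by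
    intro x
    have h1 := hβ x
    have h2 := x.2
    have h3 := (β x).2
    unfold lab at h1
    unfold hf at h2 h3
    rw [Sym2.eq_iff] at h1
    omega
  refine ⟨(split h).symm.trans ((Equiv.prodCongr β (Equiv.refl _)).trans (split h')), ?_, ?_⟩
  · intro x
    obtain ⟨⟨y, b⟩, rfl⟩ := (split h).surjective x
    simp only [Equiv.trans_apply, Equiv.symm_apply_apply, Equiv.prodCongr_apply, Prod.map]
    cases b
    · simpa [split] using (hβ1 y).1
    · simpa [split] using (hβ1 y).2
  · intro x
    obtain ⟨⟨y, b⟩, rfl⟩ := (split h).surjective x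
    rw [split_not]
    simp only [Equiv.trans_apply, Equiv.symm_apply_apply, Equiv.prodCongr_apply, Prod.map]
    rw [split_not]; rfl
end CM

namespace CM
open Equiv Finset

/-- number of darts -/
def dn {N : ℕ} (m : Fin N → Fin N → ℕ) (p : Fin N × Fin N) : ℕ :=
  if p.1 = p.2 then 2 * m p.1 p.2 else m p.1 p.2

/-- darts -/
abbrev Dart {N : ℕ} (m : Fin N → Fin N → ℕ) := Σ p : Fin N × Fin N, Fin (dn m p)

/-- flip a number -/
def fl (k : ℕ) : ℕ := if k % 2 = 0 then k + 1 else k - 1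

theorem fl_lt {k n : ℕ} (h : k < 2 * n) : fl k < 2 * n := by unfold fl; split_ifs <;> omega
theorem fl_fl (k : ℕ) : fl (fl k) = k := by unfold fl; split_ifs <;> omega
theorem fl_ne (k : ℕ) : fl k ≠ k := by unfold fl; split_ifs <;> omega

theorem rev_lt {N : ℕ} {m : Fin N → Fin N → ℕ} (hm : ∀ u v, m u v = m v u) (p : Fin N × Fin N)
    (k : ℕ) (hk : k < dn m p) : (if p.1 = p.2 then fl k else k) < dn m (p.2, p.1) := by
  unfold dn at hk ⊢
  simp only
  by_cases h : p.1 = p.2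
  · rw [if_pos h] at hk ⊢
    rw [if_pos h.symm, hm]
    exact fl_lt hk
  · rw [if_neg h] at hk ⊢
    rw [if_neg (Ne.symm h), hm]
    exact hk

/-- dart reversal -/
def rev {N : ℕ} {m : Fin N → Fin N → ℕ} (hm : ∀ u v, m u v = m v u) (d : Dart m) : Dart m :=
  ⟨(d.1.2, d.1.1), ⟨if d.1.1 = d.1.2 then fl d.2 else d.2, rev_lt hm d.1 d.2 d.2.2⟩⟩

theorem dart_ext {N : ℕ} {m : Fin N → Fin N → ℕ} {d d' : Dart m} (h : d.1 = d'.1)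
    (h' : (d.2 : ℕ) = d'.2) : d = d' := by
  rcases d with ⟨p, k⟩; rcases d' with ⟨p', k'⟩
  simp only at h; subst h
  congr 1; exact Fin.ext h'

theorem rev_rev {N : ℕ} {m : Fin N → Fin N → ℕ} (hm : ∀ u v, m u v = m v u) (d : Dart m) :
    rev hm (rev hm d) = d := by
  apply dart_ext
  · rfl
  · simp only [rev]
    by_cases h : d.1.1 = d.1.2
    · simp [h, fl_fl]
    · simp [h, Ne.symm h]

theorem rev_ne {N : ℕ} {m : Fin N → Fin N → ℕ} (hm : ∀ u v, m u v = m v u) (d : Dart m) :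
    rev hm d ≠ d := by
  intro h
  have h1 : d.1.2 = d.1.1 := congrArg (fun d => d.1.1) h
  have h2 : ((rev hm d).2 : ℕ) = d.2 := by rw [h]
  simp only [rev] at h2
  rw [if_pos h1.symm] at h2
  exact fl_ne _ h2

theorem dart_fib {N : ℕ} {m : Fin N → Fin N → ℕ} (hm : IsCubic m) (u : Fin N) :
    Nat.card {d : Dart m // d.1.1 = u} = 3 := by
  have e : {d : Dart m // d.1.1 = u} ≃ Σ v : Fin N, Fin (dn m (u, v)) :=
    { toFun := fun d => ⟨d.1.1.2, ⟨d.1.2, by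
        have := d.1.2.2
        have h2 : d.1.1 = (u, d.1.1.2) := Prod.ext d.2 rfl
        rw [← h2]; exact this⟩⟩
      invFun := fun x => ⟨⟨(u, x.1), x.2⟩, rfl⟩
      left_inv := by
        rintro ⟨⟨⟨a, b⟩, k⟩, rfl⟩; rfl
      right_inv := by
        rintro ⟨v, k⟩; rfl }
  rw [Nat.card_congr e, Nat.card_eq_fintype_card, Fintype.card_sigma]
  simp only [Fintype.card_fin]
  rw [← Finset.add_sum_erase _ _ (mem_univ u), ← hm.2 u]
  congr 1
  · simp [dn]
  · apply Finset.sum_congr rfl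
    intro v hv
    have : u ≠ v := (Finset.mem_erase.1 hv).1.symm
    simp [dn, this]

theorem surj {N : ℕ} {m : Fin N → Fin N → ℕ} (hm : IsCubic m) :
    ∃ f : Perm (HE N), IsM f ∧ mg f = m := by
  have e : ∀ u, Nonempty ({d : Dart m // d.1.1 = u} ≃ {x : HE N // x.1 = u}) := by
    intro u
    apply Finite.card_eq.1
    rw [dart_fib hm, Nat.card_eq_fintype_card, Fintype.card_subtype]
    have : (Finset.univ.filter (fun x : HE N => x.1 = u)) = ({u} : Finset (Fin N)) ×ˢ univ := by
      ext ⟨a, b⟩; simp [eq_comm]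
    rw [this]; simp
  replace e := fun z => (e z).some
  let β : Dart m ≃ HE N :=
    (Equiv.sigmaFiberEquiv (fun d : Dart m => d.1.1)).symm.trans
      ((Equiv.sigmaCongrRight e).trans (Equiv.sigmaFiberEquiv (fun x : HE N => x.1)))
  have hβ : ∀ d, (β d).1 = d.1.1 := fun d => (e d.1.1 ⟨d, rfl⟩).2
  let r : Perm (Dart m) := ⟨rev hm.1, rev hm.1, rev_rev hm.1, rev_rev hm.1⟩
  have hr : ∀ d, r d = rev hm.1 d := fun _ => rfl
  let f : Perm (HE N) := β.symm.trans (r.trans β)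
  have hf : ∀ d, f (β d) = β (rev hm.1 d) := by
    intro d; simp [f, hr]
  have hM : IsM f := by
    constructor
    · intro x; obtain ⟨d, rfl⟩ := β.surjective x
      rw [hf, hf, rev_rev]
    · intro x; obtain ⟨d, rfl⟩ := β.surjective x
      rw [hf]; exact fun h => rev_ne hm.1 d (β.injective h)
  refine ⟨f, hM, ?_⟩
  funext u v
  have key : nl f s(u, v) = 2 * m u v := by
    have h1 : nl f s(u, v) = Nat.card {x : HE N // s(x.1, (f x).1) = s(u, v)} := by
      rw [Nat.card_eq_fintype_card, Fintype.card_subtype]; rfl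
    rw [h1, ← Nat.card_congr (β.subtypeEquiv (p := fun d : Dart m => s(d.1.1, d.1.2) = s(u, v))
      (fun d => by rw [hf, hβ, hβ]; rfl))]
    rw [Nat.card_eq_fintype_card, Fintype.card_subtype]
    have h2 : (univ.filter (fun d : Dart m => s(d.1.1, d.1.2) = s(u, v)))
        = ({(u, v), (v, u)} : Finset (Fin N × Fin N)).sigma (fun _ => univ) := by
      ext ⟨⟨a, b⟩, k⟩; simp
    rw [h2, Finset.card_sigma]
    simp only [card_univ, Fintype.card_fin]
    by_cases huv : u = v
    · subst huv; simp [dn]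
    · rw [Finset.sum_pair (by simp [huv])]
      simp [dn, huv, Ne.symm huv, hm.1 v u]; ring
  have := two_mg hM u v
  omega

/-- wreath product element -/
abbrev wr {N : ℕ} (σ : Perm (Fin N)) (τ : Fin N → Perm (Fin 3)) : Perm (HE N) :=
  Equiv.prodShear σ τ

/-- wreath product -/
def HG (N : ℕ) : Subgroup (Perm (HE N)) where
  carrier := Set.range (fun p : Perm (Fin N) × (Fin N → Perm (Fin 3)) => wr p.1 p.2)
  mul_mem' := by
    rintro _ _ ⟨⟨σ, τ⟩, rfl⟩ ⟨⟨σ', τ'⟩, rfl⟩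
    exact ⟨(σ * σ', fun v => τ (σ' v) * τ' v), by ext x <;> simp⟩
  one_mem' := ⟨(1, fun _ => 1), by ext x <;> simp⟩
  inv_mem' := by
    rintro _ ⟨⟨σ, τ⟩, rfl⟩
    refine ⟨(σ⁻¹, fun v => (τ (σ⁻¹ v))⁻¹), ?_⟩
    apply eq_inv_of_mul_eq_one_left
    ext x <;> simp

theorem wr_inj {N : ℕ} : Function.Injective
    (fun p : Perm (Fin N) × (Fin N → Perm (Fin 3)) => wr p.1 p.2) := by
  rintro ⟨σ, τ⟩ ⟨σ', τ'⟩ h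
  have h1 : ∀ v i, (σ v, τ v i) = (σ' v, τ' v i) := fun v i => Equiv.congr_fun h (v, i)
  have h2 : σ = σ' := by ext v; exact congrArg (fun x => (x.1 : ℕ)) (h1 v 0)
  have h3 : τ = τ' := by
    funext v; ext i; exact congrArg (fun x => (x.2 : ℕ)) (h1 v i)
  rw [h2, h3]

/-- matchings type -/
abbrev Mt (N : ℕ) := {f : Perm (HE N) // IsM f}

instance (N : ℕ) : MulAction (Perm (HE N)) (Mt N) where
  smul g f := ⟨g * f.1 * g⁻¹, by
    constructor
    · intro x; simp [f.2.1]
    · intro x hx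
      have : f.1 (g⁻¹ x) = g⁻¹ x := by
        apply g.injective
        simpa using hx
      exact f.2.2 _ this⟩
  one_smul f := by apply Subtype.ext; change 1 * f.1 * 1⁻¹ = f.1; simp
  mul_smul g h f := by
    apply Subtype.ext
    change (g * h) * f.1 * (g * h)⁻¹ = g * (h * f.1 * h⁻¹) * g⁻¹
    simp [mul_assoc]

theorem smul_val {N : ℕ} (g : Perm (HE N)) (f : Mt N) : (g • f).1 = g * f.1 * g⁻¹ := rfl

theorem nl_smul {N : ℕ} (σ : Perm (Fin N)) (τ : Fin N → Perm (Fin 3)) (f : Mt N) (z : Sym2 (Fin N)) :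
    nl (wr σ τ • f).1 (z.map σ) = nl f.1 z := by
  unfold nl
  symm
  refine Finset.card_bij (fun x _ => wr σ τ x) ?_ (fun x _ y _ h => (wr σ τ).injective h) ?_
  · intro x hx
    simp only [mem_filter, mem_univ, true_and] at hx ⊢
    rw [smul_val, ← hx]
    simp
  · intro y hy
    simp only [mem_filter, mem_univ, true_and] at hy
    obtain ⟨x, rfl⟩ := (wr σ τ).surjective y
    refine ⟨x, ?_, rfl⟩
    simp only [mem_filter, mem_univ, true_and]
    rw [smul_val] at hy
    apply Sym2.map.injective σ.injective
    rw [← hy]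
    simp

theorem rel_iff {N : ℕ} (f f' : Mt N) :
    CubicIsoRel N ⟨mg f.1, mg_cubic f.2⟩ ⟨mg f'.1, mg_cubic f'.2⟩ ↔
      ∃ g ∈ HG N, g • f = f' := by
  constructor
  · rintro ⟨σ, hσ⟩
    have h1 : ∀ z, nl (wr σ (fun _ => 1) • f).1 z = nl f'.1 z := by
      intro z
      obtain ⟨z, rfl⟩ := (Sym2.map.injective σ.injective).bijective_of_finite.2 z
      rw [nl_smul]
      induction z with
      | _ u v =>
        have := hσ u v
        simp only at this
        rw [← two_mg f.2, Sym2.map_mk, ← two_mg f'.2]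
        rw [← this]
    obtain ⟨g, hg1, hg2⟩ := exists_iso (wr σ (fun _ => 1) • f).2 f'.2 h1
    have hg3 : g ∈ HG N := by
      refine ⟨(1, fun v => ⟨fun i => (g (v, i)).2, fun i => (g.symm (v, i)).2, ?_, ?_⟩), ?_⟩
      · intro i
        have : (v, (g (v, i)).2) = g (v, i) := Prod.ext (hg1 (v, i)).symm rfl
        simp [this]
      · intro i
        have h5 : (g.symm (v, i)).1 = v := by
          have := hg1 (g.symm (v, i)); rw [Equiv.apply_symm_apply] at this; exact this.symm
        have : (v, (g.symm (v, i)).2) = g.symm (v, i) := Prod.ext h5.symm rfl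
        simp [this]
      · ext x
        · simp [hg1]
        · simp
    refine ⟨g * wr σ (fun _ => 1), (HG N).mul_mem hg3 ⟨(σ, fun _ => 1), rfl⟩, ?_⟩
    rw [mul_smul]
    apply Subtype.ext
    rw [smul_val]
    apply Equiv.ext
    intro x
    simp only [Perm.mul_apply]
    rw [hg2]
    simp
  · rintro ⟨_, ⟨⟨σ, τ⟩, rfl⟩, rfl⟩
    refine ⟨σ, fun u v => ?_⟩
    have := nl_smul σ τ f s(u, v)
    simp only [mg]
    rw [Sym2.map_mk] at this
    rw [← this]

theorem card_I (N : ℕ) : I N = Nat.card (MulAction.orbitRel.Quotient (HG N) (Mt N)) := by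
  unfold I
  symm
  have hrel : ∀ f f' : Mt N, (MulAction.orbitRel (HG N) (Mt N)).r f f' ↔
      ∃ g ∈ HG N, g • f' = f := by
    intro f f'
    constructor
    · rintro ⟨g, hg⟩; exact ⟨g.1, g.2, hg⟩
    · rintro ⟨g, hg, h⟩; exact ⟨⟨g, hg⟩, h⟩
  have hequiv : Equivalence (CubicIsoRel N) := by
    constructor
    · intro m; exact ⟨1, fun u v => rfl⟩
    · rintro m m' ⟨σ, h⟩; exact ⟨σ⁻¹, fun u v => by rw [← h]; simp⟩
    · rintro m m' m'' ⟨σ, h⟩ ⟨σ', h'⟩; exact ⟨σ' * σ, fun u v => by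
        rw [Perm.mul_apply, Perm.mul_apply, h', h]⟩
  let F : MulAction.orbitRel.Quotient (HG N) (Mt N) → Quot (CubicIsoRel N) :=
    Quotient.lift (fun f : Mt N => Quot.mk _ ⟨mg f.1, mg_cubic f.2⟩) (by
      intro f f' h
      apply Eq.symm
      apply Quot.sound
      rw [rel_iff]
      exact (hrel f f').1 h)
  apply Nat.card_congr
  apply Equiv.ofBijective F
  constructor
  · intro a b
    induction a using Quotient.inductionOn with
    | _ f =>
    induction b using Quotient.inductionOn with
    | _ f' =>
    intro h
    apply Eq.symm
    apply Quotient.sound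
    change Quot.mk _ _ = Quot.mk _ _ at h
    have h1 := (Equivalence.quot_mk_eq_iff hequiv _ _).1 h
    rw [rel_iff] at h1
    exact (hrel _ _).2 h1
  · intro q
    induction q using Quot.ind with
    | _ m =>
    obtain ⟨f, hf, hfm⟩ := surj m.2
    refine ⟨Quotient.mk _ ⟨f, hf⟩, ?_⟩
    change Quot.mk _ _ = _
    congr 1
    exact Subtype.ext hfm

theorem burnside (N : ℕ) :
    I N * (6 ^ N * N.factorial) =
      ∑ p : Perm (Fin N) × (Fin N → Perm (Fin 3)), cm (wr p.1 p.2) := by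
  classical
  have : Fintype (MulAction.orbitRel.Quotient (HG N) (Mt N)) := Fintype.ofFinite _
  have : Fintype (HG N) := Fintype.ofFinite _
  have : ∀ g : HG N, Fintype (MulAction.fixedBy (Mt N) g) := fun _ => Fintype.ofFinite _
  let e : Perm (Fin N) × (Fin N → Perm (Fin 3)) ≃ HG N := Equiv.ofInjective _ wr_inj
  have hb := MulAction.sum_card_fixedBy_eq_card_orbits_mul_card_group (HG N) (Mt N)
  rw [← Nat.card_eq_fintype_card, ← card_I] at hb
  have hc : Fintype.card (HG N) = 6 ^ N * N.factorial := by
    rw [← Fintype.card_congr e, Fintype.card_prod, Fintype.card_perm, Fintype.card_pi]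
    simp only [Fintype.card_perm, Fintype.card_fin, prod_const, card_univ]
    rw [mul_comm]; rfl
  rw [← hc, ← hb]
  symm
  refine Fintype.sum_equiv e _ _ ?_
  intro p
  unfold cm
  refine Eq.trans ?_ (@Nat.card_eq_fintype_card _ _)
  apply Nat.card_congr
  refine ⟨fun f => ⟨⟨f.1, f.2.1⟩, ?_⟩, fun f => ⟨f.1.1, f.1.2, ?_⟩, fun f => rfl, fun f => rfl⟩
  · apply Subtype.ext
    change wr p.1 p.2 * f.1 * (wr p.1 p.2)⁻¹ = f.1
    rw [mul_inv_eq_iff_eq_mul]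
    ext1 x
    exact (f.2.2 x).symm
  · have := congrArg Subtype.val f.2
    change wr p.1 p.2 * f.1.1 * (wr p.1 p.2)⁻¹ = f.1.1 at this
    rw [mul_inv_eq_iff_eq_mul] at this
    intro x
    exact (Equiv.congr_fun this x).symm
end CM

namespace CM
open Equiv Finset

theorem cycleType_invol {X : Type*} [Fintype X] [DecidableEq X] {g : Perm X} {a : ℕ} :
    g.cycleType = Multiset.replicate a 2 ↔ (∀ x, g (g x) = x) ∧ #g.support = 2 * a := by
  have h2 : (∀ x, g (g x) = x) ↔ g ^ 2 = 1 := by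
    rw [pow_two, Equiv.ext_iff]; rfl
  rw [h2, Equiv.Perm.pow_prime_eq_one_iff (p := 2)]
  constructor
  · intro h
    constructor
    · intro c hc; rw [h] at hc; exact Multiset.eq_of_mem_replicate hc
    · rw [← Equiv.Perm.sum_cycleType, h]; simp [mul_comm]
  · rintro ⟨h, h'⟩
    have h3 := Multiset.eq_replicate_card.2 h
    rw [← Equiv.Perm.sum_cycleType, h3] at h'
    simp at h'
    rw [h3]; congr 1; omega

theorem card_invol (a i : ℕ) (h : 2 * i ≤ a) :
    #{φ : Perm (Fin a) | φ.cycleType = Multiset.replicate i 2} * ((a - 2 * i).factorial * 2 ^ i * i.factorial)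
      = a.factorial := by
  rw [Equiv.Perm.card_of_cycleType]
  have h1 : (Multiset.replicate i 2).sum = 2 * i := by simp [mul_comm]
  rw [if_pos (by
    rw [h1, Fintype.card_fin]; exact ⟨h, fun b hb => by rw [Multiset.eq_of_mem_replicate hb]⟩)]
  rw [h1, Fintype.card_fin, Multiset.prod_replicate]
  have h2 : ∏ n ∈ (Multiset.replicate i 2).toFinset, (Multiset.count n (Multiset.replicate i 2)).factorial
      = i.factorial := by
    rcases Nat.eq_zero_or_pos i with rfl | hi
    · simp
    · rw [Multiset.toFinset_replicate, if_neg (by omega)]; simp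
  rw [h2]
  apply Nat.div_mul_cancel
  obtain ⟨k, rfl⟩ := Nat.exists_eq_add_of_le h
  rw [Nat.add_sub_cancel_left]
  have h3 : 2 ^ i * i.factorial ∣ (2 * i).factorial := by
    clear h2 h1 h
    induction i with
    | zero => simp
    | succ i ih =>
      have : (2 * (i + 1)).factorial = (2 * i + 2) * ((2 * i + 1) * (2 * i).factorial) := by
        rw [show 2 * (i + 1) = 2 * i + 1 + 1 by ring, Nat.factorial_succ, Nat.factorial_succ]
      rw [this, Nat.factorial_succ, pow_succ]
      obtain ⟨c, hc⟩ := ih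
      refine ⟨c * (2 * i + 1), ?_⟩
      rw [hc]; ring
  have h4 : (2 * i).factorial * k.factorial ∣ (2 * i + k).factorial :=
    Nat.factorial_mul_factorial_dvd_factorial_add _ _
  refine dvd_trans ?_ h4
  rw [mul_assoc, mul_comm]
  exact Nat.mul_dvd_mul h3 dvd_rfl

/-- Number of perfect matchings on `c` points. -/
noncomputable def mt (c : ℕ) : ℕ := Nat.card {f : Perm (Fin c) // IsM f}

theorem card_IsM {X : Type*} [Fintype X] {c : ℕ} (h : Fintype.card X = c) :
    Nat.card {f : Perm X // IsM f} = mt c := by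
  subst h
  let e := Fintype.equivFin X
  refine Nat.card_congr (e.permCongr.subtypeEquiv ?_)
  intro f
  unfold IsM
  constructor
  · rintro ⟨h1, h2⟩
    refine ⟨fun x => by simp [h1], fun x hx => h2 (e.symm x) ?_⟩
    apply e.injective; simpa using hx
  · rintro ⟨h1, h2⟩
    refine ⟨fun x => ?_, fun x hx => h2 (e x) (by simp [hx])⟩
    have := h1 (e x); simpa using this

theorem mt_odd {c : ℕ} (h : ¬ Even c) : mt c = 0 := by
  unfold mt
  rw [Nat.card_eq_zero]
  left
  constructor
  rintro ⟨f, hf⟩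
  apply h
  have := even_card_of_invol (univ : Finset (Fin c)) f (fun _ _ => mem_univ _) (fun x _ => hf.1 x)
    (fun x _ => hf.2 x)
  simpa using this

theorem mt_even (m : ℕ) : mt (2 * m) * (2 ^ m * m.factorial) = (2 * m).factorial := by
  have h := card_invol (2 * m) m le_rfl
  rw [Nat.sub_self, Nat.factorial_zero, one_mul] at h
  rw [← h]
  congr 1
  unfold mt
  classical
  rw [Nat.card_eq_fintype_card, Fintype.card_subtype]
  congr 1
  ext f
  simp only [mem_filter, mem_univ, true_and]
  rw [cycleType_invol]
  unfold IsM
  apply and_congr_right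
  intro _
  constructor
  · intro h
    have : f.support = univ := by ext x; simp [h]
    rw [this]; simp
  · intro h x
    have : f.support = univ := by
      rw [← Finset.card_eq_iff_eq_univ, h]; simp
    have hx : x ∈ f.support := by rw [this]; simp
    exact Equiv.Perm.mem_support.1 hx

theorem cm_congr {X Y : Type*} (e : X ≃ Y) (g : Perm X) : cm (e.permCongr g) = cm g := by
  unfold cm
  symm
  refine Nat.card_congr (e.permCongr.subtypeEquiv ?_)
  intro f
  unfold IsM
  constructor
  · rintro ⟨⟨h1, h2⟩, h3⟩
    refine ⟨⟨fun x => by simp [h1], fun x hx => h2 (e.symm x) ?_⟩, fun x => by simp [h3]⟩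
    apply e.injective; simpa using hx
  · rintro ⟨⟨h1, h2⟩, h3⟩
    refine ⟨⟨fun x => ?_, fun x hx => h2 (e x) (by simp [hx])⟩, fun x => ?_⟩
    · have := h1 (e x); simpa using this
    · have := h3 (e x); simpa using this

/-- the swap on `Fin a × Bool` -/
def sw (a : ℕ) : Perm (Fin a × Bool) := Equiv.prodCongr (Equiv.refl _) Equiv.boolNot

theorem sw_apply (a : ℕ) (x : Fin a) (b : Bool) : sw a (x, b) = (x, !b) := rfl

/-- count for double points -/
noncomputable def m2 (a : ℕ) : ℕ := cm (sw a)

theorem cm_sum (c a : ℕ) :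
    cm (Equiv.sumCongr (1 : Perm (Fin c)) (sw a)) = mt c * m2 a := by
  unfold cm mt m2 cm
  rw [← Nat.card_prod]
  symm
  refine Nat.card_congr (Equiv.ofBijective (fun p => ⟨Equiv.sumCongr p.1.1 p.2.1, ?_⟩) ⟨?_, ?_⟩)
  · obtain ⟨⟨f, hf⟩, ⟨h, hh, hh'⟩⟩ := p
    refine ⟨⟨?_, ?_⟩, ?_⟩
    · rintro (x | x)
      · simp [hf.1]
      · simp [hh.1]
    · rintro (x | x)
      · simpa using hf.2 x
      · simpa using hh.2 x
    · rintro (x | x)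
      · simp
      · simp [hh']
  · rintro ⟨⟨f, hf⟩, ⟨h, hh⟩⟩ ⟨⟨f', hf'⟩, ⟨h', hh'⟩⟩ heq
    have heq' := congrArg Subtype.val heq
    simp only at heq'
    have h1 : f = f' := by
      apply Equiv.ext; intro x
      have := Equiv.congr_fun heq' (Sum.inl x); simpa using this
    have h2 : h = h' := by
      apply Equiv.ext; intro x
      have := Equiv.congr_fun heq' (Sum.inr x); simpa using this
    subst h1; subst h2; rfl
  · rintro ⟨F, hF1, hF2⟩
    have hm : Set.MapsTo F (Set.range Sum.inl) (Set.range Sum.inl) := by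
      rintro _ ⟨x, rfl⟩
      have := hF2 (Sum.inl x)
      rcases hF : F (Sum.inl x) with y | ⟨y, b⟩
      · exact ⟨y, rfl⟩
      · exfalso
        rw [Equiv.sumCongr_apply, Sum.map_inl, Perm.one_apply, hF, Equiv.sumCongr_apply, Sum.map_inr, sw_apply] at this
        simp at this
    obtain ⟨⟨f, h⟩, rfl⟩ := Equiv.Perm.mem_sumCongrHom_range_of_perm_mapsTo_inl hm
    simp only [Perm.sumCongrHom_apply] at hF1 hF2
    refine ⟨⟨⟨f, ?_, ?_⟩, ⟨h, ⟨?_, ?_⟩, ?_⟩⟩, ?_⟩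
    · intro x; simpa using hF1.1 (Sum.inl x)
    · intro x; simpa using hF1.2 (Sum.inl x)
    · intro x; simpa using hF1.1 (Sum.inr x)
    · intro x; simpa using hF1.2 (Sum.inr x)
    · intro x; simpa using hF2 (Sum.inr x)
    · rfl

theorem cm_invol {X : Type*} [Fintype X] [DecidableEq X] (g : Perm X) (a : ℕ)
    (hg : ∀ x, g (g x) = x) (ha : #g.support = 2 * a) :
    cm g = mt (Fintype.card X - 2 * a) * m2 a := by
  rw [← cm_sum]
  have hle : 2 * a ≤ Fintype.card X := by rw [← ha]; exact Finset.card_le_univ _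
  set c := Fintype.card X - 2 * a with hc
  have hcard : Fintype.card X = Fintype.card (Fin c ⊕ Fin a × Bool) := by
    simp; omega
  let e := Fintype.equivOfCardEq hcard
  rw [← cm_congr e]
  set g1 := e.permCongr g with hg1
  set g0 : Perm (Fin c ⊕ Fin a × Bool) := Equiv.sumCongr (1 : Perm (Fin c)) (sw a) with hg0
  have h1 : g1.cycleType = Multiset.replicate a 2 := by
    rw [cycleType_invol]
    refine ⟨fun x => by simp [hg1, hg], ?_⟩
    rw [← ha]
    symm
    refine Finset.card_bij (fun x _ => e x) ?_ (fun x _ y _ h => e.injective h) ?_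
    · intro x hx; rw [Perm.mem_support] at hx ⊢; simpa [hg1] using hx
    · intro y hy; refine ⟨e.symm y, ?_, by simp⟩
      rw [Perm.mem_support] at hy ⊢
      intro h; apply hy; simp [hg1, h]
  have h0 : g0.cycleType = Multiset.replicate a 2 := by
    rw [cycleType_invol]
    constructor
    · rintro (x | ⟨x, b⟩) <;> simp [hg0, sw_apply]
    · have : g0.support = (univ : Finset (Fin a × Bool)).map ⟨Sum.inr, Sum.inr_injective⟩ := by
        ext x
        rcases x with x | ⟨x, b⟩ <;> simp [hg0, sw_apply]
      rw [this, card_map, card_univ]; simp [mul_comm]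
  obtain ⟨k, hk⟩ := isConj_iff.1 (Equiv.Perm.isConj_of_cycleType_eq (h1.trans h0.symm))
  rw [← hk]
  rw [← cm_congr k g1]
  congr 1

theorem card_color {α Y : Type*} [Fintype α] [DecidableEq α] [Fintype Y] (φ : Perm α) (y0 : Y) :
    Nat.card {e : α → Y // (∀ x, e (φ x) = e x) ∧ ∀ x, φ x = x → e x = y0}
      = Fintype.card Y ^ Multiset.card φ.cycleType := by
  have h1 : Multiset.card φ.cycleType = Fintype.card φ.cycleFactorsFinset := by
    rw [Equiv.Perm.cycleType_def, Multiset.card_map, Fintype.card_coe]; rfl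
  rw [h1, ← Fintype.card_fun, ← Nat.card_eq_fintype_card]
  have hne : ∀ c : φ.cycleFactorsFinset, ∃ x, x ∈ c.1.support := by
    intro c
    have := (Equiv.Perm.mem_cycleFactorsFinset_iff.1 c.2).1
    obtain ⟨x, hx, _⟩ := this
    exact ⟨x, Perm.mem_support.2 hx⟩
  choose r hr using hne
  have hr' : ∀ c, φ.cycleOf (r c) = c.1 := fun c =>
    (Equiv.Perm.cycle_is_cycleOf (hr c) c.2).symm
  have hiter : ∀ e : α → Y, (∀ x, e (φ x) = e x) → ∀ x y, φ.SameCycle x y → e x = e y := by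
    intro e he x y ⟨i, hi⟩
    have hz : ∀ i : ℤ, ∀ x, e ((φ ^ i) x) = e x := by
      intro i
      induction i using Int.induction_on with
      | zero => simp
      | succ i ih => intro x; rw [zpow_add_one, Perm.mul_apply, ih, he]
      | pred i ih =>
        intro x; rw [zpow_sub_one, Perm.mul_apply, ih]
        have := he (φ⁻¹ x); rw [← this]; simp
    rw [← hi, hz]
  refine Nat.card_congr (Equiv.ofBijective (fun e c => e.1 (r c)) ⟨?_, ?_⟩)
  · rintro ⟨e, he1, he2⟩ ⟨e', he1', he2'⟩ h
    apply Subtype.ext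
    funext x
    by_cases hx : φ x = x
    · simp only; rw [he2 x hx, he2' x hx]
    · have hc : φ.cycleOf x ∈ φ.cycleFactorsFinset := by
        rw [Equiv.Perm.cycleOf_mem_cycleFactorsFinset_iff, Perm.mem_support]; exact hx
      have h2 := congrFun h ⟨_, hc⟩
      simp only at h2
      have h3 : φ.SameCycle (r ⟨_, hc⟩) x := by
        have h4 := hr ⟨_, hc⟩
        simp only at h4
        rw [Equiv.Perm.mem_support_cycleOf_iff] at h4
        exact h4.1.symm
      simp only
      rw [← hiter e he1 _ _ h3, ← hiter e' he1' _ _ h3]; exact h2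
  · intro k
    classical
    refine ⟨⟨fun x => if hx : φ.cycleOf x ∈ φ.cycleFactorsFinset then k ⟨_, hx⟩ else y0, ?_, ?_⟩, ?_⟩
    · intro x
      have : φ.cycleOf (φ x) = φ.cycleOf x := by simp
      simp only [this]
    · intro x hx
      apply dif_neg
      rw [Equiv.Perm.cycleOf_mem_cycleFactorsFinset_iff, Perm.mem_support]; simpa using hx
    · funext c
      simp only [hr']
      simp

theorem m2_sum (a : ℕ) : m2 a = ∑ φ : {φ : Perm (Fin a) // ∀ x, φ (φ x) = x},
    2 ^ Multiset.card φ.1.cycleType := by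
  have : ∀ φ : {φ : Perm (Fin a) // ∀ x, φ (φ x) = x}, 2 ^ Multiset.card φ.1.cycleType =
      Nat.card {e : Fin a → Bool // (∀ x, e (φ.1 x) = e x) ∧ ∀ x, φ.1 x = x → e x = true} := by
    intro φ; rw [card_color]; simp
  rw [Finset.sum_congr rfl (fun φ _ => this φ), ← Nat.card_sigma]
  unfold m2 cm
  refine Nat.card_congr (Equiv.symm (Equiv.ofBijective (fun p => ⟨⟨fun x => (p.1.1 x.1, xor x.2 (p.2.1 x.1)),
    fun x => (p.1.1 x.1, xor x.2 (p.2.1 x.1)), ?_, ?_⟩, ⟨?_, ?_⟩, ?_⟩) ⟨?_, ?_⟩))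
  · rintro ⟨x, b⟩; simp [p.2.2.1, p.1.2]
  · rintro ⟨x, b⟩; simp [p.2.2.1, p.1.2]
  · rintro ⟨x, b⟩; simp [p.2.2.1, p.1.2]
  · rintro ⟨x, b⟩ hx
    simp only [Equiv.coe_fn_mk, Prod.mk.injEq] at hx
    have := p.2.2.2 x hx.1
    rw [this] at hx; simp at hx
  · rintro ⟨x, b⟩
    simp [sw_apply]
  · rintro ⟨⟨φ, hφ⟩, ⟨e, he⟩⟩ ⟨⟨φ', hφ'⟩, ⟨e', he'⟩⟩ h
    have h0 := congrArg Subtype.val h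
    have h1 : ∀ x, (φ x, e x) = (φ' x, e' x) := by
      intro x
      have := Equiv.congr_fun h0 (x, false); simpa using this
    have h2 : φ = φ' := by ext1 x; exact congrArg Prod.fst (h1 x)
    have h3 : e = e' := by ext1 x; exact congrArg Prod.snd (h1 x)
    subst h2; subst h3; rfl
  · rintro ⟨f, ⟨hf1, hf2⟩, hf3⟩
    have hb : ∀ x b, f (x, b) = ((f (x, false)).1, xor b (f (x, false)).2) := by
      intro x b
      cases b
      · simp
      · have := hf3 (x, false)
        rw [sw_apply] at this
        simp only [Bool.not_false] at this
        rw [this, Bool.true_xor]; rfl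
    have hφ : ∀ x, (f ((f (x, false)).1, false)).1 = x ∧
        (f ((f (x, false)).1, false)).2 = (f (x, false)).2 := by
      intro x
      have h1 := hf1 (x, false)
      have h2 := hb (f (x, false)).1 (f (x, false)).2
      rw [show ((f (x, false)).1, (f (x, false)).2) = f (x, false) from rfl, h1] at h2
      have h3 := congrArg Prod.fst h2
      have h4 := congrArg Prod.snd h2
      simp only at h3 h4
      refine ⟨h3.symm, ?_⟩
      generalize (f ((f (x, false)).1, false)).2 = p at h4
      generalize (f (x, false)).2 = q at h4
      revert h4; cases p <;> cases q <;> simp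
    refine ⟨⟨⟨⟨fun x => (f (x, false)).1, fun x => (f (x, false)).1, fun x => (hφ x).1,
      fun x => (hφ x).1⟩, fun x => (hφ x).1⟩, ⟨fun x => (f (x, false)).2, fun x => (hφ x).2, ?_⟩⟩, ?_⟩
    · intro x hx
      by_contra hne
      apply hf2 (x, false)
      exact Prod.ext hx (by simpa using hne)
    · apply Subtype.ext
      apply Equiv.ext
      rintro ⟨x, b⟩
      exact (hb x b).symm

theorem m2_eq (a : ℕ) : (m2 a : ℝ) =
    ∑ i ∈ range (a + 1), if 2 * i ≤ a then (a.factorial : ℝ) / (i.factorial * (a - 2 * i).factorial) else 0 := by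
  have hs : m2 a = ∑ φ ∈ univ.filter (fun φ : Perm (Fin a) => ∀ x, φ (φ x) = x),
      2 ^ Multiset.card φ.cycleType := by
    rw [m2_sum]
    exact (Finset.sum_subtype _ (by simp) (fun φ : Perm (Fin a) => 2 ^ Multiset.card φ.cycleType)).symm
  have hle : ∀ φ : Perm (Fin a), (∀ x, φ (φ x) = x) →
      φ.cycleType = Multiset.replicate (Multiset.card φ.cycleType) 2 := by
    intro φ h
    rw [Multiset.eq_replicate_card]
    apply (Equiv.Perm.pow_prime_eq_one_iff (p := 2)).1
    ext1 x; rw [pow_two]; exact h x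
  have hle2 : ∀ φ : Perm (Fin a), (∀ x, φ (φ x) = x) → 2 * Multiset.card φ.cycleType ≤ a := by
    intro φ h
    have := (cycleType_invol.1 (hle φ h)).2
    rw [← this]
    exact (Finset.card_le_univ _).trans (by simp)
  rw [hs, ← Finset.sum_fiberwise_of_maps_to (g := fun φ => Multiset.card φ.cycleType) (t := range (a + 1))]
  · push_cast
    apply Finset.sum_congr rfl
    intro i hi
    have h1 : ∑ φ ∈ (univ.filter (fun φ : Perm (Fin a) => ∀ x, φ (φ x) = x)).filter
        (fun φ => Multiset.card φ.cycleType = i), (2 : ℝ) ^ Multiset.card φ.cycleType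
        = #{φ : Perm (Fin a) | φ.cycleType = Multiset.replicate i 2} * 2 ^ i := by
      have h2 : (univ.filter (fun φ : Perm (Fin a) => ∀ x, φ (φ x) = x)).filter
        (fun φ => Multiset.card φ.cycleType = i) = univ.filter (fun φ : Perm (Fin a) => φ.cycleType = Multiset.replicate i 2) := by
        ext φ
        simp only [mem_filter, mem_univ, true_and]
        constructor
        · rintro ⟨h, rfl⟩; exact hle φ h
        · intro h; exact ⟨(cycleType_invol.1 h).1, by rw [h]; simp⟩
      rw [h2, Finset.sum_congr rfl (g := fun _ => (2 : ℝ) ^ i)]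
      · simp
      · intro φ hφ; rw [(mem_filter.1 hφ).2]; simp
    rw [h1]
    split_ifs with h
    · have := card_invol a i h
      rw [eq_div_iff (by positivity), ← this]
      push_cast; ring
    · have : univ.filter (fun φ : Perm (Fin a) => φ.cycleType = Multiset.replicate i 2) = ∅ := by
        rw [Finset.filter_eq_empty_iff]
        intro φ _ hφ
        have h3 := hle2 φ (cycleType_invol.1 hφ).1
        rw [hφ] at h3; simp at h3; omega
      rw [this]; simp
  · intro φ hφ
    have := hle2 φ (mem_filter.1 hφ).2
    simp; omega
end CM

namespace CM
open Equiv Finset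

theorem dvd_aux (n i j : ℤ) (h1 : n ∣ 2 * i) (h2 : ¬ n ∣ i) (h3 : n ∣ 2 * j) (h4 : ¬ n ∣ j) :
    n ∣ i - j := by
  obtain ⟨u, hu⟩ := h1
  obtain ⟨v, hv⟩ := h3
  rcases Int.even_or_odd' u with ⟨k, rfl | rfl⟩
  · exact absurd ⟨k, by linarith⟩ h2
  rcases Int.even_or_odd' v with ⟨l, rfl | rfl⟩
  · exact absurd ⟨l, by linarith⟩ h4
  exact ⟨k - l, by linarith⟩

theorem zpow_unique {X : Type*} (g : Perm X) (y : X) (i j : ℤ)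
    (h1 : (g ^ i) ((g ^ i) y) = y) (h2 : (g ^ i) y ≠ y)
    (h3 : (g ^ j) ((g ^ j) y) = y) (h4 : (g ^ j) y ≠ y) : (g ^ i) y = (g ^ j) y := by
  have key : ∀ k : ℤ, (g ^ k) y = y ↔ (MulAction.period g y : ℤ) ∣ k := fun k => by
    rw [← MulAction.zpow_smul_eq_iff_period_dvd]; rfl
  rw [← Perm.mul_apply, ← zpow_add, ← two_mul, key] at h1 h3
  rw [Ne, key] at h2 h4
  have := dvd_aux _ i j h1 h2 h3 h4
  rw [← key, sub_eq_neg_add, zpow_add, Perm.mul_apply, zpow_neg, Perm.inv_eq_iff_eq] at this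
  exact this

theorem comm_zpow {X : Type*} {f g : Perm X} (h : ∀ x, f (g x) = g (f x)) (i : ℤ) (x : X) :
    f ((g ^ i) x) = (g ^ i) (f x) := by
  have hc : Commute f g := by ext1 x; exact h x
  have := (hc.zpow_right i)
  exact Equiv.congr_fun this x

theorem agree {X : Type*} {g : Perm X} {Y : Finset X} (ν : X → ℕ)
    (hν : ∀ x y, ν x = ν y ↔ g.SameCycle x y)
    (hY : ∀ x, g x ≠ x → ∃ y ∈ Y, ∃ i : ℤ, (g ^ i) y = x) (hYs : ∀ y ∈ Y, g y ≠ y)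
    {f f' : Perm X} (hf : IsM f) (hf' : IsM f') (hc : ∀ x, f (g x) = g (f x))
    (hc' : ∀ x, f' (g x) = g (f' x))
    (h0 : ∀ x, g x = x → f x = f' x)
    (hE : ∀ y ∈ Y, ν (f y) = ν y ↔ ν (f' y) = ν y)
    (P : X → Prop)
    (hP : ∀ y ∈ Y, P y → f y = f' y)
    (hPn : ∀ y ∈ Y, ¬ P y → ν (f y) ≠ ν y → ∀ y' ∈ Y, ν y' = ν (f y) → ν (f y') = ν y → P y') :
    f = f' := by
  have hagY : ∀ y ∈ Y, f y = f' y := by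
    intro y hy
    by_cases h1 : P y
    · exact hP y hy h1
    by_cases h2 : ν (f y) = ν y
    · have h3 := (hE y hy).1 h2
      obtain ⟨i, hi⟩ := ((hν _ _).1 h2.symm)
      obtain ⟨j, hj⟩ := ((hν _ _).1 h3.symm)
      rw [← hi, ← hj]
      apply zpow_unique
      · have := hf.1 y
        rw [← hi, comm_zpow hc, ← hi] at this; exact this
      · rw [hi]; exact hf.2 y
      · have := hf'.1 y
        rw [← hj, comm_zpow hc', ← hj] at this; exact this
      · rw [hj]; exact hf'.2 y
    · have h3 : g (f y) ≠ f y := by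
        rw [← hc]; exact fun h => hYs y hy (f.injective h)
      obtain ⟨y', hy', i, hi⟩ := hY _ h3
      have h4 : ν y' = ν (f y) := (hν _ _).2 ⟨i, hi⟩
      have h5 : f y' = (g ^ (-i)) y := by
        have := hf.1 y
        rw [← hi, comm_zpow hc] at this
        rw [zpow_neg, Perm.eq_inv_iff_eq]; exact this
      have h6 : ν (f y') = ν y := by
        symm; exact (hν _ _).2 ⟨-i, h5.symm⟩
      have h7 := hP y' hy' (hPn y hy h1 h2 y' hy' h4 h6)
      have h8 : f' ((g ^ i) y') = y := by
        rw [comm_zpow hc', ← h7, h5, zpow_neg]; simp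
      have h9 := hf'.1 ((g ^ i) y')
      rw [h8] at h9
      rw [h9, hi]
  ext1 x
  by_cases hx : g x = x
  · exact h0 x hx
  · obtain ⟨y, hy, i, rfl⟩ := hY x hx
    rw [comm_zpow hc, comm_zpow hc', hagY y hy]

theorem cm_le {X : Type*} [Fintype X] [DecidableEq X] (g : Perm X) (Y : Finset X)
    (hY : ∀ x, g x ≠ x → ∃ y ∈ Y, ∃ i : ℤ, (g ^ i) y = x) (hYs : ∀ y ∈ Y, g y ≠ y) :
    cm g ≤ 3 ^ #Y * ((#g.support + 1) ^ (#Y / 2) * mt (Fintype.card X - #g.support)) := by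
  classical
  obtain ⟨ν, hν⟩ : ∃ ν : X → ℕ, ∀ x y, ν x = ν y ↔ g.SameCycle x y := by
    let Q := Quotient (Equiv.Perm.SameCycle.setoid g)
    have : Fintype Q := Fintype.ofFinite _
    refine ⟨fun x => Fintype.equivFin Q (Quotient.mk _ x), fun x y => ?_⟩
    rw [Fin.val_inj, (Fintype.equivFin Q).injective.eq_iff, Quotient.eq]
    rfl
  let col : Perm X → (Y → Fin 3) := fun f y =>
    if ν y < ν (f y) then 0 else if ν (f y) < ν y then 1 else 2
  let Fs : Finset (Perm X) := univ.filter (fun f => IsM f ∧ ∀ x, f (g x) = g (f x))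
  have hFs : cm g = #Fs := by
    unfold cm; rw [Nat.card_eq_fintype_card, Fintype.card_subtype]
  rw [hFs, mul_comm]
  have h3 : 3 ^ #Y = #(univ : Finset (Y → Fin 3)) := by simp
  rw [h3]
  refine Finset.card_le_mul_card_image_of_maps_to (f := col) (fun _ _ => mem_univ _) _ ?_
  intro k _
  have hcol0 : ∀ f (y : Y), col f y = 0 ↔ ν y < ν (f y) := by
    intro f y; simp only [col]; split_ifs <;> simp_all
  have hcol1 : ∀ f (y : Y), col f y = 1 ↔ ν (f y) < ν y := by
    intro f y; simp only [col]; split_ifs <;> simp_all; omega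
  have hcol2 : ∀ f (y : Y), col f y = 2 ↔ ν (f y) = ν y := by
    intro f y; simp only [col]
    rcases lt_trichotomy (ν y) (ν (f y)) with h | h | h
    · rw [if_pos h]; exact ⟨fun h' => absurd h' (by decide), fun h' => absurd h' (by omega)⟩
    · rw [if_neg (by omega), if_neg (by omega)]; exact ⟨fun _ => h.symm, fun _ => rfl⟩
    · rw [if_neg (by omega), if_pos h]
      exact ⟨fun h' => absurd h' (by decide), fun h' => absurd h' (by omega)⟩
  obtain ⟨t, ht2, ht⟩ : ∃ t : Fin 3, t ≠ 2 ∧ Fintype.card {y : Y // k y = t} ≤ #Y / 2 := by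
    have h01 : Fintype.card {y : Y // k y = 0} + Fintype.card {y : Y // k y = 1} ≤ #Y := by
      rw [Fintype.card_subtype, Fintype.card_subtype, ← Finset.card_union_of_disjoint]
      · refine (Finset.card_le_univ _).trans (by simp)
      · rw [Finset.disjoint_filter]; intro y _ h; simp [h]
    by_cases h : Fintype.card {y : Y // k y = 0} ≤ #Y / 2
    · exact ⟨0, by decide, h⟩
    · exact ⟨1, by decide, by omega⟩
  have hfx : ∀ f ∈ Fs.filter (fun f => col f = k), ∀ x, (g (f x) = f x) ↔ (g x = x) := by
    intro f hf x
    have hc := (mem_filter.1 (mem_filter.1 hf).1).2.2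
    rw [← hc, f.injective.eq_iff]
  have hsup : ∀ f ∈ Fs.filter (fun f => col f = k), ∀ y ∈ Y, f y ∈ g.support := by
    intro f hf y hy
    rw [Perm.mem_support, Ne, hfx f hf]; exact hYs y hy
  have hcardF : Nat.card {f0 : Perm {x // g x = x} // IsM f0} = mt (Fintype.card X - #g.support) := by
    apply card_IsM
    have := Fintype.card_subtype_compl (fun x => g x ≠ x)
    simp only [not_not] at this
    rw [this]
    congr 1
    rw [Fintype.card_subtype]; rfl
  let Ψ : {f // f ∈ Fs.filter (fun f => col f = k)} →
      ({y : Y // k y = t} → g.support) × {f0 : Perm {x // g x = x} // IsM f0} := fun f =>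
    (fun y => ⟨f.1 y, hsup f.1 f.2 y.1.1 y.1.2⟩,
      ⟨f.1.subtypePerm (hfx f.1 f.2), by
        have hM := (mem_filter.1 (mem_filter.1 f.2).1).2.1
        constructor
        · intro x; apply Subtype.ext; simp [hM.1]
        · intro x hx; exact hM.2 x.1 (congrArg Subtype.val hx)⟩)
  have hΨ : Function.Injective Ψ := by
    rintro ⟨f, hf⟩ ⟨f', hf'⟩ h
    apply Subtype.ext
    obtain ⟨⟨hM, hc⟩, hk⟩ : (IsM f ∧ ∀ x, f (g x) = g (f x)) ∧ col f = k := by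
      simpa [Fs] using hf
    obtain ⟨⟨hM', hc'⟩, hk'⟩ : (IsM f' ∧ ∀ x, f' (g x) = g (f' x)) ∧ col f' = k := by
      simpa [Fs] using hf'
    have hA : ∀ y : Y, k y = t → f y = f' y := by
      intro y hy
      have := congrFun (congrArg Prod.fst h) ⟨y, hy⟩
      exact congrArg Subtype.val this
    have hB : ∀ x, g x = x → f x = f' x := by
      intro x hx
      have := Equiv.congr_fun (congrArg Subtype.val (congrArg Prod.snd h)) ⟨x, hx⟩
      exact congrArg Subtype.val this
    change f = f'
    refine agree ν hν hY hYs hM hM' hc hc' hB ?_ (fun x => ∃ hx : x ∈ Y, k ⟨x, hx⟩ = t) ?_ ?_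
    · intro y hy
      have h1 := hcol2 f ⟨y, hy⟩
      have h2 := hcol2 f' ⟨y, hy⟩
      rw [hk] at h1; rw [hk'] at h2
      exact h1.symm.trans h2
    · rintro y hy ⟨_, h⟩; exact hA ⟨y, hy⟩ h
    · intro y hy hn hne y' hy' h1 h2
      refine ⟨hy', ?_⟩
      have hn' : k ⟨y, hy⟩ ≠ t := fun h => hn ⟨hy, h⟩
      have a0 := hcol0 f ⟨y, hy⟩
      have a1 := hcol1 f ⟨y, hy⟩
      have b0 := hcol0 f ⟨y', hy'⟩
      have b1 := hcol1 f ⟨y', hy'⟩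
      rw [hk] at a0 a1 b0 b1
      simp only at a0 a1 b0 b1
      rw [h1, h2] at b0 b1
      have h01 : t = 0 ∨ t = 1 := by
        exact (by decide : ∀ t : Fin 3, t ≠ 2 → t = 0 ∨ t = 1) t ht2
      rcases h01 with rfl | rfl
      · rw [b0]; rw [Ne, a0] at hn'; omega
      · rw [b1]; rw [Ne, a1] at hn'; omega
  have := Nat.card_le_card_of_injective Ψ hΨ
  rw [Nat.card_prod, hcardF, Nat.card_eq_fintype_card, Nat.card_eq_fintype_card, Fintype.card_coe,
    Fintype.card_fun, Fintype.card_coe] at this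
  refine this.trans (Nat.mul_le_mul_right _ ?_)
  calc #g.support ^ Fintype.card {y : Y // k y = t}
      ≤ (#g.support + 1) ^ Fintype.card {y : Y // k y = t} := Nat.pow_le_pow_left (by omega) _
    _ ≤ _ := Nat.pow_le_pow_right (by omega) ht
end CM

namespace CM
open Equiv Finset

theorem exists_reps {α : Type*} [Fintype α] [DecidableEq α] (σ : Perm α) :
    ∃ R : Finset α, #R ≤ Multiset.card σ.cycleType ∧ (∀ r ∈ R, σ r ≠ r) ∧
      ∀ v, σ v ≠ v → ∃ r ∈ R, ∃ i : ℤ, (σ ^ i) r = v := by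
  classical
  have h : ∀ c : σ.cycleFactorsFinset, ∃ r, r ∈ (c : Perm α).support := by
    intro c
    have := (Perm.mem_cycleFactorsFinset_iff.1 c.2).1
    exact Finset.nonempty_iff_ne_empty.2 (by simpa using this.ne_one)
  choose ρ hρ using h
  refine ⟨univ.image ρ, ?_, ?_, ?_⟩
  · refine Finset.card_image_le.trans ?_
    rw [Perm.cycleType_def, Multiset.card_map]
    simp
  · intro r hr
    obtain ⟨c, _, rfl⟩ := mem_image.1 hr
    have := Perm.mem_cycleFactorsFinset_support_le c.2 (hρ c)
    simpa using this
  · intro v hv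
    have hm : σ.cycleOf v ∈ σ.cycleFactorsFinset := by
      rw [Perm.cycleOf_mem_cycleFactorsFinset_iff]; simpa using hv
    refine ⟨ρ ⟨_, hm⟩, mem_image_of_mem _ (mem_univ _), ?_⟩
    have h1 := hρ ⟨_, hm⟩
    rw [Perm.mem_support_cycleOf_iff] at h1
    exact h1.1.symm

theorem wr_zpow_fst {N : ℕ} (σ : Perm (Fin N)) (τ : Fin N → Perm (Fin 3)) (k : ℤ) (x : HE N) :
    (((wr σ τ) ^ k) x).1 = (σ ^ k) x.1 := by
  induction k generalizing x with
  | zero => rfl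
  | succ i ih =>
    rw [zpow_add_one, zpow_add_one, Perm.mul_apply, Perm.mul_apply, ih]; rfl
  | pred i ih =>
    rw [zpow_sub_one, zpow_sub_one, Perm.mul_apply, Perm.mul_apply, ih]
    congr 1

theorem wr_pow_fix {N : ℕ} (σ : Perm (Fin N)) (τ : Fin N → Perm (Fin 3)) (k : ℕ) (v : Fin N)
    (hv : σ v = v) (y : Fin 3) :
    ((wr σ τ) ^ k) (v, y) = (v, ((τ v) ^ k) y) := by
  induction k generalizing y with
  | zero => rfl
  | succ i ih =>
    rw [pow_succ, pow_succ, Perm.mul_apply, Perm.mul_apply]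
    have : (wr σ τ) (v, y) = (v, τ v y) := by
      change (σ v, τ v y) = _
      rw [hv]
    rw [this, ih]

theorem s3_rep : ∀ ρ : Perm (Fin 3), ρ ≠ 1 → ∃ y, ρ y ≠ y ∧ ∀ i, ρ i ≠ i →
    ∃ k : Fin 3, (ρ ^ (k : ℕ)) y = i := by decide

theorem s3_supp : ∀ ρ : Perm (Fin 3), ρ ≠ 1 → #ρ.support ≠ 2 → #ρ.support = 3 := by decide
theorem s3_supp1 : ∀ ρ : Perm (Fin 3), #ρ.support ≠ 2 → #ρ.support ≠ 3 → #ρ.support = 0 := by decide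

def sA {N : ℕ} (σ : Perm (Fin N)) (τ : Fin N → Perm (Fin 3)) : Finset (Fin N) :=
  univ.filter fun v => σ v = v ∧ #(τ v).support = 2
def sB {N : ℕ} (σ : Perm (Fin N)) (τ : Fin N → Perm (Fin 3)) : Finset (Fin N) :=
  univ.filter fun v => σ v = v ∧ #(τ v).support = 3

theorem wr_support {N : ℕ} (σ : Perm (Fin N)) (τ : Fin N → Perm (Fin 3)) :
    #(wr σ τ).support = 3 * #σ.support + 2 * #(sA σ τ) + 3 * #(sB σ τ) := by
  have h1 : ∀ x : HE N, (wr σ τ) x ≠ x ↔ (σ x.1 ≠ x.1 ∨ τ x.1 x.2 ≠ x.2) := by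
    intro x
    change (σ x.1, τ x.1 x.2) ≠ x ↔ _
    rw [Ne, Prod.ext_iff]; simp only; tauto
  have h2 : #(wr σ τ).support = ∑ x : HE N, if (wr σ τ) x ≠ x then 1 else 0 := by
    rw [Finset.sum_boole]; rfl
  rw [h2, Fintype.sum_prod_type]
  have h3 : #σ.support = ∑ v, if σ v ≠ v then 1 else 0 := by rw [Finset.sum_boole]; rfl
  have h4 : #(sA σ τ) = ∑ v, if σ v = v ∧ #(τ v).support = 2 then 1 else 0 := by
    rw [Finset.sum_boole]; rfl
  have h5 : #(sB σ τ) = ∑ v, if σ v = v ∧ #(τ v).support = 3 then 1 else 0 := by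
    rw [Finset.sum_boole]; rfl
  rw [h3, h4, h5, Finset.mul_sum, Finset.mul_sum, Finset.mul_sum, ← Finset.sum_add_distrib,
    ← Finset.sum_add_distrib]
  refine Finset.sum_congr rfl fun v _ => ?_
  simp only [h1]
  by_cases hv : σ v = v
  · have h6 : (∑ i, if σ v ≠ v ∨ τ v i ≠ i then 1 else 0) = #(τ v).support := by
      simp only [hv, ne_eq, not_true, false_or]
      rw [Finset.sum_boole]; rfl
    rw [h6]
    simp only [hv, ne_eq, not_true, if_false, true_and]
    by_cases h7 : #(τ v).support = 2
    · simp [h7]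
    by_cases h8 : #(τ v).support = 3
    · simp [h8]
    simp [h7, h8, s3_supp1 _ h7 h8]
  · simp [hv]

theorem cm_wr_le {N : ℕ} (σ : Perm (Fin N)) (τ : Fin N → Perm (Fin 3)) (j r q : ℕ)
    (hj : Multiset.card σ.cycleType = j)
    (hr : r = 3 * #σ.support + 2 * #(sA σ τ) + 3 * #(sB σ τ))
    (hq : q = 3 * j + #(sA σ τ) + #(sB σ τ)) :
    cm (wr σ τ) ≤ 3 ^ q * ((r + 1) ^ (q / 2) * mt (3 * N - r)) := by
  classical
  obtain ⟨R, hR, hR1, hR2⟩ := exists_reps σ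
  have hch : ∀ ρ : Perm (Fin 3), ∃ y, ρ ≠ 1 → (ρ y ≠ y ∧ ∀ i, ρ i ≠ i →
    ∃ k : Fin 3, (ρ ^ (k : ℕ)) y = i) := by
    intro ρ
    by_cases h : ρ = 1
    · exact ⟨0, fun h' => absurd h h'⟩
    · obtain ⟨y, hy⟩ := s3_rep ρ h
      exact ⟨y, fun _ => hy⟩
  choose y hy using hch
  let Y : Finset (HE N) := (R ×ˢ univ) ∪ (sA σ τ ∪ sB σ τ).image (fun v => (v, y (τ v)))
  have hAB : ∀ v, v ∈ sA σ τ ∪ sB σ τ ↔ σ v = v ∧ τ v ≠ 1 := by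
    intro v
    simp only [mem_union, sA, sB, mem_filter, mem_univ, true_and]
    constructor
    · rintro (⟨h, h'⟩ | ⟨h, h'⟩) <;> refine ⟨h, fun h1 => ?_⟩ <;> simp [h1] at h'
    · rintro ⟨h, h'⟩
      by_cases h2 : #(τ v).support = 2
      · exact Or.inl ⟨h, h2⟩
      · exact Or.inr ⟨h, s3_supp _ h' h2⟩
  have hYc : #Y ≤ q := by
    have e1 : #(R ×ˢ (univ : Finset (Fin 3))) = #R * 3 := by rw [card_product]; simp
    have e2 : #((sA σ τ ∪ sB σ τ).image (fun v => (v, y (τ v)))) ≤ #(sA σ τ) + #(sB σ τ) :=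
      card_image_le.trans (card_union_le _ _)
    have e3 : #Y ≤ _ := card_union_le _ _
    omega
  have hfix : ∀ v i, σ v = v → (wr σ τ) (v, i) = (v, τ v i) := by
    intro v i h
    change (σ v, τ v i) = _
    rw [h]
  have := cm_le (wr σ τ) Y ?_ ?_
  · rw [wr_support, ← hr] at this
    have hc : Fintype.card (HE N) = 3 * N := by simp [HE, mul_comm]
    rw [hc] at this
    refine this.trans ?_
    gcongr
    · norm_num
    · omega
  · rintro ⟨v, i⟩ hx
    by_cases hv : σ v = v
    · rw [hfix v i hv] at hx
      have hi : τ v i ≠ i := fun h => hx (by rw [h])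
      have h1 : τ v ≠ 1 := fun h => hi (by rw [h]; rfl)
      obtain ⟨k, hk⟩ := (hy _ h1).2 i hi
      refine ⟨(v, y (τ v)), mem_union_right _ (mem_image_of_mem _ ((hAB v).2 ⟨hv, h1⟩)), ((k:ℕ):ℤ), ?_⟩
      rw [zpow_natCast, wr_pow_fix σ τ _ v hv, hk]
    · obtain ⟨r, hr, k, hk⟩ := hR2 v hv
      refine ⟨((wr σ τ) ^ (-k)) (v, i), ?_, k, ?_⟩
      · apply mem_union_left
        rw [mem_product]
        refine ⟨?_, mem_univ _⟩
        rw [wr_zpow_fst, zpow_neg]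
        convert hr
        rw [Perm.inv_eq_iff_eq]; exact hk.symm
      · rw [zpow_neg]; simp
  · intro z hz
    rcases mem_union.1 hz with h | h
    · intro h'
      exact hR1 _ (mem_product.1 h).1 (congrArg Prod.fst h')
    · obtain ⟨v, hv, rfl⟩ := mem_image.1 h
      obtain ⟨h1, h2⟩ := (hAB v).1 hv
      rw [hfix v _ h1]
      intro h'
      exact (hy _ h2).1 (congrArg Prod.snd h')
end CM

namespace CM
open Equiv Finset

theorem exists_perm_of_map_eq {α Y : Type*} [Fintype α] [DecidableEq α] (e e' : α → Y)
    (h : (univ : Finset α).val.map e = univ.val.map e') : ∃ φ : Perm α, ∀ x, e' (φ x) = e x := by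
  classical
  have h1 : ∀ y, Nonempty ({x // e x = y} ≃ {x // e' x = y}) := by
    intro y
    refine ⟨Fintype.equivOfCardEq ?_⟩
    have := congrArg (Multiset.count y) h
    rw [Multiset.count_map, Multiset.count_map] at this
    rw [Fintype.card_subtype, Fintype.card_subtype]
    simp only [eq_comm (a := y)] at this
    exact this
  have E := fun y => (h1 y).some
  refine ⟨(Equiv.sigmaFiberEquiv e).symm.trans
    ((Equiv.sigmaCongrRight E).trans (Equiv.sigmaFiberEquiv e')), fun x => ?_⟩
  exact (E (e x) ⟨x, rfl⟩).2

theorem perm_count_full {α : Type*} [Fintype α] [DecidableEq α] (j : ℕ) (hj : j ≤ Fintype.card α) :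
    #(univ.filter fun φ : Perm α => Multiset.card φ.cycleType = j) * j.factorial
      ≤ (Fintype.card α).factorial * 4 ^ (Fintype.card α) := by
  classical
  let _ : MulAction (Perm α) (α → Fin (j+1)) := arrowAction
  have hsm : ∀ (g : Perm α) (e : α → Fin (j+1)), g • e = fun x => e (g⁻¹ x) := fun g e => rfl
  have : Fintype (MulAction.orbitRel.Quotient (Perm α) (α → Fin (j+1))) := Fintype.ofFinite _
  have hF : ∀ g : Perm α, Fintype (MulAction.fixedBy (α → Fin (j+1)) g) := fun _ => Fintype.ofFinite _
  have hb := MulAction.sum_card_fixedBy_eq_card_orbits_mul_card_group (Perm α) (α → Fin (j+1))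
  rw [Fintype.card_perm] at hb
  have h1 : Fintype.card (MulAction.orbitRel.Quotient (Perm α) (α → Fin (j+1))) ≤
      4 ^ (Fintype.card α) := by
    let F : MulAction.orbitRel.Quotient (Perm α) (α → Fin (j+1)) → Sym (Fin (j+1)) (Fintype.card α) :=
      fun o => ⟨univ.val.map o.out, by simp⟩
    have hF : Function.Injective F := by
      intro o o' h
      have h' := congrArg Subtype.val h
      obtain ⟨φ, hφ⟩ := exists_perm_of_map_eq _ _ h'
      rw [← Quotient.out_eq o, ← Quotient.out_eq o']
      apply Quotient.sound
      change MulAction.orbitRel _ _ _ _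
      rw [MulAction.orbitRel_apply]
      refine ⟨φ⁻¹, ?_⟩
      simp only [hsm, inv_inv]
      funext x; exact hφ x
    refine (Fintype.card_le_of_injective F hF).trans ?_
    rw [Sym.card_sym_eq_choose, Fintype.card_fin]
    refine (Nat.choose_le_two_pow _ _).trans ?_
    rw [show 4 = 2 ^ 2 from rfl, ← pow_mul]
    exact Nat.pow_le_pow_right (by norm_num) (by omega)
  have h2 : ∀ g : Perm α, Multiset.card g.cycleType = j →
      j.factorial ≤ Fintype.card (MulAction.fixedBy (α → Fin (j+1)) g) := by
    intro g hg
    have h3 := card_color (Y := Fin (j+1)) g 0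
    rw [hg, Fintype.card_fin] at h3
    calc j.factorial ≤ j ^ j := Nat.factorial_le_pow j
      _ ≤ (j+1) ^ j := Nat.pow_le_pow_left (by omega) _
      _ ≤ _ := by
        rw [← h3, ← Nat.card_eq_fintype_card]
        refine Nat.card_le_card_of_injective
          (fun e => ⟨e.1, ?_⟩) (fun a b h => Subtype.ext (by simpa using h))
        rw [MulAction.mem_fixedBy, hsm]
        funext x
        have := e.2.1 (g⁻¹ x)
        have h4 : g (g⁻¹ x) = x := by simp
        rw [h4] at this
        exact this.symm
  calc _ = ∑ g ∈ univ.filter (fun φ : Perm α => Multiset.card φ.cycleType = j), j.factorial := by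
        simp
    _ ≤ ∑ g ∈ univ.filter (fun φ : Perm α => Multiset.card φ.cycleType = j),
        Fintype.card (MulAction.fixedBy (α → Fin (j+1)) g) :=
        Finset.sum_le_sum fun g hg => h2 g (mem_filter.1 hg).2
    _ ≤ ∑ g : Perm α, Fintype.card (MulAction.fixedBy (α → Fin (j+1)) g) :=
        Finset.sum_le_univ_sum_of_nonneg (fun _ => Nat.zero_le _)
    _ = _ := hb
    _ ≤ _ := by rw [mul_comm]; exact Nat.mul_le_mul_left _ h1

theorem perm_count {N : ℕ} (s j : ℕ) (hj : j ≤ s) :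
    #(univ.filter fun σ : Perm (Fin N) => #σ.support = s ∧ Multiset.card σ.cycleType = j)
      * j.factorial ≤ N ^ s * 4 ^ s := by
  classical
  have h1 : ∀ S ∈ powersetCard s (univ : Finset (Fin N)),
      #((univ.filter fun σ : Perm (Fin N) => #σ.support = s ∧ Multiset.card σ.cycleType = j).filter
        fun σ => σ.support = S) ≤
      #(univ.filter fun φ : Perm {x // x ∈ S} => Multiset.card φ.cycleType = j) := by
    intro S hS
    have hsub : ∀ σ : Perm (Fin N), σ.support = S → ∀ x, σ x ∈ S ↔ x ∈ S := by
      intro σ h x; rw [← h]; exact Perm.apply_mem_support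
    have hof : ∀ (σ : Perm (Fin N)) (h : σ.support = S),
        Perm.ofSubtype (σ.subtypePerm (hsub σ h)) = σ := by
      intro σ h
      apply Perm.ofSubtype_subtypePerm
      intro x hx; rw [← h]; simpa using hx
    refine Finset.card_le_card_of_injOn
      (fun σ => if h : σ.support = S then σ.subtypePerm (hsub σ h) else 1) ?_ ?_
    · intro σ hσ
      simp only [coe_filter, mem_filter, mem_univ, true_and, Set.mem_ofPred_eq] at hσ ⊢
      rw [dif_pos hσ.2]
      have h5 := congrArg (fun f => Multiset.card (Perm.cycleType f)) (hof σ hσ.2)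
      simp only [Perm.cycleType_ofSubtype] at h5
      exact h5.trans hσ.1.2
    · intro σ hσ σ' hσ' h
      simp only [coe_filter, mem_filter, mem_univ, true_and, Set.mem_ofPred_eq] at hσ hσ' h
      rw [dif_pos hσ.2, dif_pos hσ'.2] at h
      rw [← hof σ hσ.2, ← hof σ' hσ'.2, h]
  have h2 : ∀ S ∈ powersetCard s (univ : Finset (Fin N)),
      #((univ.filter fun σ : Perm (Fin N) => #σ.support = s ∧ Multiset.card σ.cycleType = j).filter
        fun σ => σ.support = S) * j.factorial ≤ s.factorial * 4 ^ s := by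
    intro S hS
    have hc : Fintype.card {x // x ∈ S} = s := by
      rw [Fintype.card_coe]; exact (mem_powersetCard.1 hS).2
    refine (Nat.mul_le_mul_right _ (h1 S hS)).trans ?_
    have := perm_count_full (α := {x // x ∈ S}) j (by rw [hc]; exact hj)
    rw [hc] at this
    exact this
  rw [Finset.card_eq_sum_card_fiberwise (f := fun σ : Perm (Fin N) => σ.support)
    (t := powersetCard s univ), Finset.sum_mul]
  · refine (Finset.sum_le_sum h2).trans ?_
    rw [Finset.sum_const, card_powersetCard, smul_eq_mul, ← mul_assoc, card_univ, Fintype.card_fin]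
    refine Nat.mul_le_mul_right _ ?_
    rw [mul_comm, ← Nat.descFactorial_eq_factorial_mul_choose]
    exact Nat.descFactorial_le_pow _ _
  · intro σ hσ
    simp only [coe_filter, Set.mem_ofPred_eq] at hσ
    simp [mem_powersetCard, hσ.2.1]

theorem two_cyc {α : Type*} [Fintype α] [DecidableEq α] (σ : Perm α) :
    2 * Multiset.card σ.cycleType ≤ #σ.support := by
  rw [← Perm.sum_cycleType]
  have := Multiset.card_nsmul_le_sum (s := σ.cycleType) (a := 2)
    (fun x hx => Perm.two_le_of_mem_cycleType hx)
  rw [smul_eq_mul] at this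
  omega

theorem tau_count {N : ℕ} (T : Finset (Fin N)) :
    #(univ.filter fun τ : Fin N → Perm (Fin 3) => ∀ v, v ∉ T → τ v = 1) = 6 ^ #T := by
  classical
  have : (univ.filter fun τ : Fin N → Perm (Fin 3) => ∀ v, v ∉ T → τ v = 1) =
      Fintype.piFinset (fun v => if v ∈ T then univ else {1}) := by
    ext τ
    simp only [mem_filter, mem_univ, true_and, Fintype.mem_piFinset]
    refine forall_congr' fun v => ?_
    by_cases h : v ∈ T <;> simp [h]
  rw [this, Fintype.card_piFinset]
  have h2 : ∀ v, #(if v ∈ T then (univ : Finset (Perm (Fin 3))) else {1}) = if v ∈ T then 6 else 1 := by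
    intro v; split_ifs
    · rw [card_univ, Fintype.card_perm]; rfl
    · rfl
  simp only [h2]
  rw [Finset.prod_ite]; simp

/-- pairs with given parameters -/
def cls (N s j a b : ℕ) : Finset (Perm (Fin N) × (Fin N → Perm (Fin 3))) :=
  univ.filter fun p => (#p.1.support = s ∧ Multiset.card p.1.cycleType = j) ∧
    #(sA p.1 p.2) = a ∧ #(sB p.1 p.2) = b

theorem cls_count (N s j a b : ℕ) (hj : j ≤ s) :
    #(cls N s j a b) * (j.factorial * a.factorial * b.factorial) ≤ N ^ (s + a + b) * 24 ^ (s + a + b) := by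
  classical
  set P := univ.filter fun σ : Perm (Fin N) => #σ.support = s ∧ Multiset.card σ.cycleType = j with hP
  have h1 : #(cls N s j a b) ≤ #P * (N.choose a * N.choose b * 6 ^ (s + a + b)) := by
    have h2 : #(P ×ˢ (powersetCard a (univ : Finset (Fin N)) ×ˢ powersetCard b (univ : Finset (Fin N))))
        = #P * (N.choose a * N.choose b) := by
      simp [card_product, card_powersetCard]
    rw [← mul_assoc, ← h2, mul_comm]
    refine Finset.card_le_mul_card_image_of_maps_to
      (f := fun p => (p.1, sA p.1 p.2, sB p.1 p.2)) ?_ _ ?_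
    · intro p hp
      simp only [cls, mem_filter, mem_univ, true_and] at hp
      simp only [mem_product, hP, mem_filter, mem_univ, true_and, mem_powersetCard, subset_univ]
      exact hp
    · rintro ⟨σ, A, B⟩ hx
      simp only [mem_product, hP, mem_filter, mem_univ, true_and, mem_powersetCard, subset_univ] at hx
      have hT : #(σ.support ∪ A ∪ B) ≤ s + a + b := by
        have e1 := card_union_le (σ.support ∪ A) B
        have e2 := card_union_le σ.support A
        omega
      refine le_trans ?_ (Nat.pow_le_pow_right (by norm_num) hT)
      rw [← tau_count]
      refine Finset.card_le_card_of_injOn (fun p => p.2) ?_ ?_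
      · rintro ⟨σ', τ⟩ hp
        simp only [coe_filter, Set.mem_ofPred_eq, Prod.mk.injEq, mem_filter, mem_univ, true_and] at hp ⊢
        obtain ⟨-, rfl, rfl, rfl⟩ := hp
        intro v hv
        simp only [mem_union, not_or, sA, sB, mem_filter, mem_univ, true_and, Perm.mem_support,
          not_not, not_and] at hv
        have := s3_supp1 _ (hv.1.2 hv.1.1) (hv.2 hv.1.1)
        simpa using this
      · rintro ⟨σ', τ⟩ hp ⟨σ'', τ'⟩ hp' h
        simp only [coe_filter, Set.mem_ofPred_eq, Prod.mk.injEq, mem_filter, mem_univ, true_and] at hp hp' h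
        rw [h, hp.2.1, hp'.2.1]
  have h3 := perm_count (N := N) s j hj
  have h4 : N.choose a * a.factorial ≤ N ^ a := by
    rw [mul_comm, ← Nat.descFactorial_eq_factorial_mul_choose]
    exact Nat.descFactorial_le_pow _ _
  have h5 : N.choose b * b.factorial ≤ N ^ b := by
    rw [mul_comm, ← Nat.descFactorial_eq_factorial_mul_choose]
    exact Nat.descFactorial_le_pow _ _
  calc _ ≤ #P * (N.choose a * N.choose b * 6 ^ (s + a + b)) * (j.factorial * a.factorial * b.factorial) :=
        Nat.mul_le_mul_right _ h1
    _ = (#P * j.factorial) * (N.choose a * a.factorial) * (N.choose b * b.factorial) * 6 ^ (s+a+b) := by ring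
    _ ≤ (N ^ s * 4 ^ s) * N ^ a * N ^ b * 6 ^ (s+a+b) := by gcongr
    _ ≤ (N ^ s * 4 ^ (s+a+b)) * N ^ a * N ^ b * 6 ^ (s+a+b) := by gcongr <;> omega
    _ = _ := by rw [show 24 = 4 * 6 from rfl, mul_pow]; ring
end CM

namespace CM
open Equiv Finset

theorem mt_succ (m : ℕ) : mt (2 * (m + 1)) = (2 * m + 1) * mt (2 * m) := by
  have h1 := mt_even (m + 1)
  have h2 := mt_even m
  have h3 : (2 * (m + 1)).factorial = (2 * m + 2) * ((2 * m + 1) * (2 * m).factorial) := by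
    rw [show 2 * (m + 1) = (2 * m + 1) + 1 by ring, Nat.factorial_succ, Nat.factorial_succ]
  rw [h3, ← h2, Nat.factorial_succ, pow_succ] at h1
  have h4 : 0 < 2 ^ m * 2 * ((m + 1) * m.factorial) := by positivity
  apply Nat.eq_of_mul_eq_mul_right h4
  rw [h1]; ring

theorem mt_pos (m : ℕ) : 0 < mt (2 * m) := by
  have := mt_even m
  have h2 := Nat.factorial_pos (2 * m)
  by_contra h
  have : mt (2 * m) = 0 := by omega
  simp_all

theorem exp_one_le_three : Real.exp 1 ≤ 3 := by
  have := Real.exp_one_lt_d9; linarith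

theorem pow_succ_le (x t : ℕ) (h : t ≤ x) : ((x : ℝ) + 1) ^ t ≤ 3 * (x : ℝ) ^ t := by
  rcases Nat.eq_zero_or_pos x with rfl | hx
  · have : t = 0 := by omega
    subst this; norm_num
  have hx' : (0 : ℝ) < x := by exact_mod_cast hx
  have h1 : (x : ℝ) + 1 = x * (1 + 1 / x) := by field_simp
  rw [h1, mul_pow, mul_comm]
  refine mul_le_mul_of_nonneg_right ?_ (by positivity)
  have h2 : (1 + 1 / (x : ℝ)) ≤ Real.exp (1 / x) := by
    have := Real.add_one_le_exp (1 / (x : ℝ)); linarith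
  calc (1 + 1 / (x : ℝ)) ^ t ≤ (Real.exp (1 / x)) ^ t := by gcongr
    _ = Real.exp (t * (1 / x)) := by rw [← Real.exp_nat_mul]
    _ ≤ Real.exp 1 := by
        apply Real.exp_le_exp.2
        rw [mul_one_div, div_le_one hx']; exact_mod_cast h
    _ ≤ 3 := exp_one_le_three

theorem mt_ratio (n t : ℕ) :
    (mt (2 * n) : ℝ) * ((n : ℝ) + t) ^ t ≤ 3 ^ t * mt (2 * (n + t)) := by
  induction t with
  | zero => simp
  | succ t ih =>
    rw [← add_assoc, mt_succ]
    have h := pow_succ_le (n + t) t (by omega)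
    push_cast at h ⊢
    have h0 : (0 : ℝ) ≤ mt (2 * n) := by positivity
    calc (mt (2 * n) : ℝ) * (n + (t + 1)) ^ (t + 1)
        = mt (2 * n) * ((n + t + 1) ^ t * (n + t + 1)) := by rw [← add_assoc, pow_succ]
      _ ≤ mt (2 * n) * ((3 * (n + t) ^ t) * (2 * (n + t) + 1)) := by
          gcongr
          have : (0 : ℝ) ≤ n + t := by positivity
          linarith
      _ = 3 * (2 * (n + t) + 1) * (mt (2 * n) * (n + t) ^ t) := by ring
      _ ≤ 3 * (2 * (n + t) + 1) * (3 ^ t * mt (2 * (n + t))) := by gcongr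
      _ = _ := by ring

theorem mt_bound (n r : ℕ) (hn : 0 < n) (hr : r ≤ 3 * (2 * n)) (x : ℝ) (hx : 0 ≤ x)
    (hx2 : x ^ 2 * (2 * n) = 1) :
    (mt (3 * (2 * n) - r) : ℝ) ≤ 2 ^ r * x ^ r * mt (3 * (2 * n)) := by
  by_cases he : Even r
  · obtain ⟨t, rfl⟩ := he
    have h := mt_ratio (3 * n - t) t
    rw [show 2 * (3 * n - t) = 3 * (2 * n) - (t + t) by omega,
      show 2 * (3 * n - t + t) = 3 * (2 * n) by omega] at h
    have h1 : ((3 * n - t : ℕ) : ℝ) + t = 3 * n := by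
      rw [Nat.cast_sub (by omega)]; push_cast; ring
    rw [h1] at h
    have hn' : (0 : ℝ) < n := by exact_mod_cast hn
    have h2 : ((3 : ℝ) * n) ^ t * (2 ^ t * x ^ (t + t)) = 3 ^ t := by
      rw [← two_mul, pow_mul, ← mul_pow, ← mul_pow]
      congr 1
      linear_combination 3 * hx2
    have h3 : (mt (3 * (2 * n) - (t + t)) : ℝ) ≤ 2 ^ t * x ^ (t + t) * mt (3 * (2 * n)) := by
      have hp : (0 : ℝ) < (3 * n) ^ t := by positivity
      rw [← h2] at h
      refine le_of_mul_le_mul_right (h.trans_eq ?_) hp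
      ring
    refine h3.trans ?_
    gcongr
    · norm_num
    · omega
  · have : ¬ Even (3 * (2 * n) - r) := by
      intro h; apply he
      rw [Nat.even_sub hr] at h
      exact h.1 ⟨3 * n, by ring⟩
    rw [mt_odd this]
    simp only [Nat.cast_zero]
    positivity

theorem pow_half_bound (j a b s r q d : ℕ) (hj : 2 * j ≤ s) (hd : d = s + a + b)
    (hr : r = 3 * s + 2 * a + 3 * b) (hq : q = 3 * j + a + b) :
    ((r : ℝ) + 1) ^ (q / 2) ≤ 16 * 4096 ^ d *
      (j.factorial * √(j.factorial) * √(a.factorial) * √(b.factorial)) := by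
  have hb : ∀ n : ℕ, ((r : ℝ) + 1) ^ n ≤ n.factorial * Real.exp (r + 1) := by
    intro n
    have := Real.pow_div_factorial_le_exp ((r : ℝ) + 1) (by positivity) n
    rw [div_le_iff₀ (by positivity)] at this
    linarith
  have h1 : (((r : ℝ) + 1) ^ (q / 2)) ^ 2 ≤ ((r : ℝ) + 1) ^ q := by
    rw [← pow_mul]
    exact pow_le_pow_right₀ (by linarith [(Nat.cast_nonneg r : (0:ℝ) ≤ r)]) (by omega)
  have h2 : ((r : ℝ) + 1) ^ q ≤ (j.factorial : ℝ) ^ 3 * a.factorial * b.factorial * (Real.exp (r + 1)) ^ 5 := by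
    rw [hq, pow_add, pow_add, mul_comm 3 j, pow_mul]
    calc _ ≤ ((j.factorial : ℝ) * Real.exp (r + 1)) ^ 3 * (a.factorial * Real.exp (r + 1)) *
          (b.factorial * Real.exp (r + 1)) := by
            gcongr
            · exact hb j
            · exact hb a
            · exact hb b
      _ = _ := by ring
  have h3 : (Real.exp ((r : ℝ) + 1)) ^ 5 ≤ 256 * (4096 ^ d) ^ 2 := by
    have e : Real.exp ((r : ℝ) + 1) = Real.exp 1 ^ (r + 1) := by
      rw [← Real.exp_nat_mul]; push_cast; ring_nf
    rw [e]
    calc (Real.exp 1 ^ (r + 1)) ^ 5 ≤ (3 ^ (r + 1)) ^ 5 := by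
          gcongr; exact exp_one_le_three
      _ ≤ ((3 : ℝ) ^ (3 * d + 1)) ^ 5 := by
          gcongr
          · norm_num
          · omega
      _ = 243 * (14348907 : ℝ) ^ d := by
          rw [← pow_mul, show (3 * d + 1) * 5 = 5 + 15 * d by ring, pow_add, pow_mul]; norm_num
      _ ≤ 256 * (16777216 : ℝ) ^ d := by gcongr <;> norm_num
      _ = _ := by rw [← pow_mul, mul_comm d 2, pow_mul]; norm_num
  have hs : ∀ n : ℕ, √(n.factorial : ℝ) ^ 2 = n.factorial := fun n => Real.sq_sqrt (by positivity)
  refine le_of_sq_le_sq ?_ (by positivity)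
  calc _ ≤ _ := h1
    _ ≤ _ := h2
    _ ≤ (j.factorial : ℝ) ^ 3 * a.factorial * b.factorial * (256 * (4096 ^ d) ^ 2) := by gcongr
    _ = 256 * (4096 ^ d) ^ 2 * (j.factorial ^ 2 * √(j.factorial) ^ 2 * √(a.factorial) ^ 2 * √(b.factorial) ^ 2) := by
        rw [hs, hs, hs]; ring
    _ = _ := by ring

theorem one_le_sqrt_fact (n : ℕ) : 1 ≤ √(n.factorial : ℝ) := by
  rw [Real.one_le_sqrt]; exact_mod_cast Nat.factorial_pos n

theorem term_bound (n s j a b r q d : ℕ) (hn : 0 < n) (hj : 2 * j ≤ s) (hjN : j ≤ 2 * n)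
    (hd : d = s + a + b) (hr : r = 3 * s + 2 * a + 3 * b) (hq : q = 3 * j + a + b)
    (hrN : r ≤ 3 * (2 * n)) (y : ℝ) (hy : 0 < y) (hy1 : y ≤ 1) (hy4 : y ^ 4 * (2 * n) = 1) :
    (#(cls (2 * n) s j a b) : ℝ) * (3 ^ q * (((r : ℝ) + 1) ^ (q / 2) * mt (3 * (2 * n) - r)))
      ≤ 16 * 21233664 ^ d * (√(a.factorial))⁻¹ * y ^ (s + b) * mt (3 * (2 * n)) := by
  have hc := cls_count (2 * n) s j a b (by omega)
  rw [← hd] at hc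
  have hc' : (#(cls (2 * n) s j a b) : ℝ) ≤
      (2 * n) ^ d * 24 ^ d / (j.factorial * a.factorial * b.factorial) := by
    rw [le_div_iff₀ (by positivity)]; exact_mod_cast hc
  have h3 : (3 : ℝ) ^ q ≤ 27 ^ d := by
    rw [show (27 : ℝ) = 3 ^ 3 by norm_num, ← pow_mul]
    exact pow_le_pow_right₀ (by norm_num) (by omega)
  have hp := pow_half_bound j a b s r q d hj hd hr hq
  have hm := mt_bound n r hn hrN (y ^ 2) (by positivity) (by rw [← pow_mul]; exact hy4)
  have h8 : (2 : ℝ) ^ r ≤ 8 ^ d := by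
    rw [show (8 : ℝ) = 2 ^ 3 by norm_num, ← pow_mul]
    exact pow_le_pow_right₀ (by norm_num) (by omega)
  have hN : ((2 : ℝ) * n) ^ d * (y ^ 2) ^ r = y ^ (2 * (s + b)) := by
    have : (y ^ 2) ^ r = (y ^ 4) ^ d * y ^ (2 * (s + b)) := by
      rw [← pow_mul, ← pow_mul, ← pow_add]; congr 1; omega
    rw [this, ← mul_assoc, ← mul_pow, mul_comm ((2:ℝ) * n), hy4, one_pow, one_mul]
  have hj2 : √(j.factorial : ℝ) * y ^ s ≤ 1 := by
    refine le_of_sq_le_sq ?_ (by norm_num)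
    rw [mul_pow, Real.sq_sqrt (by positivity), one_pow]
    calc (j.factorial : ℝ) * (y ^ s) ^ 2 ≤ (2 * n) ^ j * (y ^ 4) ^ j := by
          gcongr
          · have : j.factorial ≤ (2 * n) ^ j :=
              (Nat.factorial_le_pow j).trans (Nat.pow_le_pow_left hjN _)
            exact_mod_cast this
          · rw [← pow_mul, ← pow_mul]
            exact pow_le_pow_of_le_one hy.le hy1 (by omega)
      _ = 1 := by rw [← mul_pow, mul_comm, hy4, one_pow]
  have hs : ∀ n : ℕ, √(n.factorial : ℝ) ^ 2 = n.factorial := fun n => Real.sq_sqrt (by positivity)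
  set M : ℝ := ((mt (3 * (2 * n)) : ℕ) : ℝ) with hM
  have hM0 : 0 ≤ M := by positivity
  set u := √(j.factorial : ℝ)
  set v := √(a.factorial : ℝ)
  set w := √(b.factorial : ℝ)
  have hv : 1 ≤ v := one_le_sqrt_fact a
  have hw : 1 ≤ w := one_le_sqrt_fact b
  have hu : 1 ≤ u := one_le_sqrt_fact j
  rw [← hs j, ← hs a, ← hs b] at hc'
  rw [← hs j] at hp
  change _ ≤ 16 * 4096 ^ d * (u ^ 2 * u * v * w) at hp
  change _ ≤ _ / (u ^ 2 * v ^ 2 * w ^ 2) at hc'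
  have hv0 : 0 < v := by linarith
  have hw0 : 0 < w := by linarith
  have hu0 : 0 < u := by linarith
  calc _ ≤ ((2 * n) ^ d * 24 ^ d / (u ^ 2 * v ^ 2 * w ^ 2)) * (27 ^ d *
        ((16 * 4096 ^ d * (u ^ 2 * u * v * w)) * (8 ^ d * (y ^ 2) ^ r * M))) := by
        gcongr
        refine hm.trans ?_
        gcongr
    _ = 16 * (24 ^ d * 27 ^ d * 4096 ^ d * 8 ^ d) * (((2 : ℝ) * n) ^ d * (y ^ 2) ^ r) * (u / (v * w)) * M := by
        field_simp
    _ = 16 * 21233664 ^ d * (y ^ (2 * (s + b))) * (u / (v * w)) * M := by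
        rw [hN, ← mul_pow, ← mul_pow, ← mul_pow]; norm_num
    _ = 16 * 21233664 ^ d * v⁻¹ * ((u * y ^ s) * (w⁻¹ * y ^ b) * y ^ (s + b)) * M := by
        rw [two_mul, pow_add y (s+b) (s+b)]
        nth_rewrite 1 [pow_add y s b]
        field_simp
    _ ≤ 16 * 21233664 ^ d * v⁻¹ * (1 * (1 * 1) * y ^ (s + b)) * M := by
        gcongr
        · exact inv_le_one_of_one_le₀ hw
        · exact pow_le_one₀ hy.le hy1
    _ = _ := by ring
end CM

namespace CM
open Equiv Finset

theorem pow_div_sqrt_fact (C : ℝ) (hC : 0 ≤ C) (a : ℕ) :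
    C ^ a * (√(a.factorial : ℝ))⁻¹ ≤ Real.exp (2 * C ^ 2) * (1 / 2) ^ a := by
  have hv : 0 < √(a.factorial : ℝ) := lt_of_lt_of_le one_pos (one_le_sqrt_fact a)
  have h1 : (2 * C) ^ a * (√(a.factorial : ℝ))⁻¹ ≤ Real.exp (2 * C ^ 2) := by
    refine le_of_sq_le_sq ?_ (by positivity)
    rw [mul_pow, inv_pow, Real.sq_sqrt (by positivity), ← Real.exp_nat_mul]
    have := Real.pow_div_factorial_le_exp (4 * C ^ 2) (by positivity) a
    calc _ = (4 * C ^ 2) ^ a / a.factorial := by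
          rw [div_eq_mul_inv, ← pow_mul, mul_comm a 2, pow_mul]; ring_nf
      _ ≤ _ := this
      _ = _ := by congr 1; push_cast; ring
  calc C ^ a * (√(a.factorial : ℝ))⁻¹ = ((2 * C) ^ a * (√(a.factorial : ℝ))⁻¹) * (1 / 2) ^ a := by
        have h2 : (2 : ℝ) ^ a * (1 / 2) ^ a = 1 := by rw [← mul_pow]; norm_num
        rw [mul_pow]
        linear_combination (-(C ^ a * (√(a.factorial : ℝ))⁻¹)) * h2
    _ ≤ _ := by gcongr

theorem term_simpl (C y : ℝ) (hC : 1 ≤ C) (hy : 0 < y) (hz : 2 * C * y ≤ 1 / 2) (s j a b : ℕ)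
    (hj : 2 * j ≤ s) (h0 : s + b ≠ 0) :
    16 * C ^ (s + a + b) * (√(a.factorial : ℝ))⁻¹ * y ^ (s + b) ≤
      (64 * C * Real.exp (2 * C ^ 2) * y) * ((1 / 2) ^ s * ((1 / 2) ^ j * ((1 / 2) ^ a * (1 / 2) ^ b))) := by
  have h1 := pow_div_sqrt_fact C (by linarith) a
  have h2 : (1 : ℝ) ≤ 2 ^ s * (1 / 2) ^ j := by
    calc (1 : ℝ) = 2 ^ j * (1 / 2) ^ j := by rw [← mul_pow]; norm_num
      _ ≤ _ := by gcongr <;> first | omega | norm_num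
  have h3 : (2 * C * y) ^ (s + b) ≤ 4 * C * y * (1 / 2) ^ (s + b) := by
    obtain ⟨k, hk⟩ := Nat.exists_eq_succ_of_ne_zero h0
    rw [hk, pow_succ, pow_succ]
    calc (2 * C * y) ^ k * (2 * C * y) ≤ (1 / 2) ^ k * (2 * C * y) := by gcongr
      _ = _ := by ring
  have h4 : (2 : ℝ) ^ s ≤ 2 ^ (s + b) := by gcongr <;> first | norm_num | omega
  calc _ = 16 * (C ^ a * (√(a.factorial : ℝ))⁻¹) * (C * y) ^ (s + b) * 1 := by
        rw [mul_pow, show s + a + b = (s + b) + a by ring, pow_add C (s+b) a]; ring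
    _ ≤ 16 * (Real.exp (2 * C ^ 2) * (1 / 2) ^ a) * (C * y) ^ (s + b) * (2 ^ (s + b) * (1 / 2) ^ j) := by
        gcongr
        exact h2.trans (by gcongr)
    _ = 16 * (Real.exp (2 * C ^ 2) * (1 / 2) ^ a) * (2 * C * y) ^ (s + b) * (1 / 2) ^ j := by
        rw [mul_assoc 2 C y, mul_pow 2 (C * y)]; ring
    _ ≤ 16 * (Real.exp (2 * C ^ 2) * (1 / 2) ^ a) * (4 * C * y * (1 / 2) ^ (s + b)) * (1 / 2) ^ j := by
        gcongr
    _ = _ := by rw [pow_add]; ring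

/-- error pairs -/
def errS (N : ℕ) : Finset (Perm (Fin N) × (Fin N → Perm (Fin 3))) :=
  univ.filter fun p => #p.1.support + #(sB p.1 p.2) ≠ 0

theorem half_sum (n : ℕ) : ∑ i ∈ range n, (1 / 2 : ℝ) ^ i ≤ 2 := sum_geometric_two_le n

theorem err_bound (C : ℝ) (hC : C = 21233664) (n : ℕ) (hn : 0 < n) (y : ℝ) (hy : 0 < y)
    (hz : 2 * C * y ≤ 1 / 2) (hy4 : y ^ 4 * (2 * n) = 1) :
    ∑ p ∈ errS (2 * n), (cm (wr p.1 p.2) : ℝ) ≤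
      (1024 * C * Real.exp (2 * C ^ 2)) * y * mt (3 * (2 * n)) := by
  have hC1 : 1 ≤ C := by rw [hC]; norm_num
  have hy1 : y ≤ 1 := by nlinarith
  set M : ℝ := ((mt (3 * (2 * n)) : ℕ) : ℝ) with hM
  have hM0 : 0 ≤ M := by positivity
  let R := range (2 * n + 1)
  let key : Perm (Fin (2 * n)) × (Fin (2 * n) → Perm (Fin 3)) → ℕ × ℕ × ℕ × ℕ := fun p =>
    (#p.1.support, Multiset.card p.1.cycleType, #(sA p.1 p.2), #(sB p.1 p.2))
  have hle : ∀ S : Finset (Fin (2 * n)), #S < 2 * n + 1 := fun S =>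
    Nat.lt_succ_of_le ((card_le_univ S).trans (by simp))
  have hmaps : ∀ p ∈ errS (2 * n), key p ∈ R ×ˢ (R ×ˢ (R ×ˢ R)) := by
    intro p _
    simp only [key, R, mem_product, mem_range]
    refine ⟨hle _, ?_, hle _, hle _⟩
    have := two_cyc p.1
    have := hle p.1.support
    omega
  rw [← Finset.sum_fiberwise_of_maps_to hmaps]
  set K := 64 * C * Real.exp (2 * C ^ 2) * y with hK
  have hK0 : 0 ≤ K := by positivity
  have hmain : ∀ t ∈ R ×ˢ (R ×ˢ (R ×ˢ R)),
      ∑ p ∈ errS (2 * n) with key p = t, (cm (wr p.1 p.2) : ℝ) ≤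
      K * M * ((1 / 2) ^ t.1 * ((1 / 2) ^ t.2.1 * ((1 / 2) ^ t.2.2.1 * (1 / 2) ^ t.2.2.2))) := by
    rintro ⟨s, j, a, b⟩ ht
    rcases Finset.eq_empty_or_nonempty ((errS (2 * n)).filter (fun p => key p = (s, j, a, b))) with h | h
    · rw [h, Finset.sum_empty]; positivity
    obtain ⟨p0, hp0⟩ := h
    simp only [mem_filter, errS, mem_univ, true_and, key, Prod.mk.injEq] at hp0
    obtain ⟨hp1, hs, hj, ha, hb⟩ := hp0
    have h2j := two_cyc p0.1
    have hrr := wr_support p0.1 p0.2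
    have hrc : #(wr p0.1 p0.2).support ≤ 3 * (2 * n) :=
      (card_le_univ _).trans (by simp [HE, mul_comm])
    rw [hs, ha, hb] at hrr
    have hjn := hle p0.1.support
    rw [hs] at h2j hp1 hjn
    rw [hj] at h2j
    rw [hb] at hp1
    rw [hrr] at hrc
    have hsub : (errS (2 * n)).filter (fun p => key p = (s, j, a, b)) ⊆ cls (2 * n) s j a b := by
      intro p hp
      simp only [mem_filter, errS, mem_univ, true_and, key, Prod.mk.injEq, cls] at hp ⊢
      tauto
    have h1 : ∀ p ∈ (errS (2 * n)).filter (fun p => key p = (s, j, a, b)),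
        (cm (wr p.1 p.2) : ℝ) ≤ 3 ^ (3 * j + a + b) * ((((3 * s + 2 * a + 3 * b : ℕ) : ℝ) + 1) ^
          ((3 * j + a + b) / 2) * mt (3 * (2 * n) - (3 * s + 2 * a + 3 * b))) := by
      intro p hp
      have hp' := hsub hp
      simp only [mem_filter, mem_univ, true_and, cls] at hp'
      obtain ⟨⟨e1, e2⟩, e3, e4⟩ := hp'
      have := cm_wr_le p.1 p.2 j _ _ e2 rfl rfl
      rw [e1, e3, e4] at this
      exact_mod_cast this
    refine (Finset.sum_le_card_nsmul _ _ _ h1).trans ?_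
    rw [nsmul_eq_mul]
    have hcard : (#((errS (2 * n)).filter (fun p => key p = (s, j, a, b))) : ℝ) ≤ #(cls (2 * n) s j a b) := by
      exact_mod_cast card_le_card hsub
    refine (mul_le_mul_of_nonneg_right hcard (by positivity)).trans ?_
    refine (term_bound n s j a b _ _ _ hn h2j (by omega) rfl rfl rfl hrc y hy hy1 hy4).trans ?_
    have := term_simpl C y hC1 hy hz s j a b h2j hp1
    rw [← hK] at this
    rw [← hC]
    refine (mul_le_mul_of_nonneg_right this hM0).trans_eq ?_
    ring
  refine (Finset.sum_le_sum hmain).trans ?_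
  rw [← Finset.mul_sum, Finset.sum_product]
  simp only
  simp_rw [← Finset.mul_sum]
  rw [← Finset.sum_mul, Finset.sum_product]
  simp only
  simp_rw [← Finset.mul_sum]
  rw [← Finset.sum_mul, Finset.sum_product]
  simp only
  simp_rw [← Finset.mul_sum]
  rw [← Finset.sum_mul]
  have hh := half_sum (2 * n + 1)
  have hh0 : (0 : ℝ) ≤ ∑ i ∈ R, (1 / 2 : ℝ) ^ i := Finset.sum_nonneg fun _ _ => by positivity
  calc _ ≤ K * M * (2 * (2 * (2 * 2))) := by gcongr
    _ = _ := by rw [hK]; ring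
end CM

namespace CM
open Equiv Finset

theorem s3_invol : ∀ ρ : Perm (Fin 3), #ρ.support ≠ 3 → ∀ i, ρ (ρ i) = i := by decide
theorem s3_trans : #(univ.filter fun ρ : Perm (Fin 3) => #ρ.support = 2) = 3 := by decide
theorem s3_tri : ∀ ρ : Perm (Fin 3), #ρ.support ≠ 3 → #ρ.support ≠ 2 → ρ = 1 := by decide

theorem main_count {N : ℕ} (A : Finset (Fin N)) :
    #(univ.filter fun τ : Fin N → Perm (Fin 3) => sB 1 τ = ∅ ∧ sA 1 τ = A) = 3 ^ #A := by
  classical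
  have : (univ.filter fun τ : Fin N → Perm (Fin 3) => sB 1 τ = ∅ ∧ sA 1 τ = A) =
      Fintype.piFinset (fun v => if v ∈ A then (univ.filter fun ρ : Perm (Fin 3) => #ρ.support = 2)
        else {1}) := by
    ext τ
    simp only [mem_filter, mem_univ, true_and, Fintype.mem_piFinset]
    constructor
    · rintro ⟨h, rfl⟩ v
      have h1 : v ∉ sB 1 τ := by rw [h]; simp
      simp only [sB, sA, Perm.one_apply, true_and, mem_filter, mem_univ] at h1 ⊢
      split_ifs with h2
      · simpa using h2
      · simpa using s3_tri _ h1 h2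
    · intro h
      constructor
      · ext v
        simp only [sB, Perm.one_apply, true_and, mem_filter, mem_univ, notMem_empty, iff_false]
        intro h3
        have := h v
        split_ifs at this
        · simp only [mem_filter, mem_univ, true_and] at this; omega
        · rw [mem_singleton] at this; rw [this] at h3; simp at h3
      · ext v
        simp only [sA, Perm.one_apply, true_and, mem_filter, mem_univ]
        have := h v
        split_ifs at this with h4
        · simp only [mem_filter, mem_univ, true_and] at this; tauto
        · rw [mem_singleton] at this; rw [this]; simp [h4]
  rw [this, Fintype.card_piFinset]
  have h2 : ∀ v, #(if v ∈ A then (univ.filter fun ρ : Perm (Fin 3) => #ρ.support = 2) else {1})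
      = if v ∈ A then 3 else 1 := by
    intro v; split_ifs
    · exact s3_trans
    · rfl
  simp only [h2]
  rw [Finset.prod_ite]; simp

theorem main_sum (N : ℕ) :
    ∑ p ∈ univ.filter (fun p => p ∉ errS N), cm (wr p.1 p.2) =
      ∑ a ∈ range (N + 1), N.choose a * (3 ^ a * (mt (3 * N - 2 * a) * m2 a)) := by
  classical
  have h1 : ∑ p ∈ univ.filter (fun p => p ∉ errS N), cm (wr p.1 p.2) =
      ∑ τ ∈ univ.filter (fun τ : Fin N → Perm (Fin 3) => sB 1 τ = ∅), cm (wr 1 τ) := by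
    symm
    refine Finset.sum_bij (fun τ _ => ((1 : Perm (Fin N)), τ)) ?_ ?_ ?_ ?_
    · intro τ hτ
      simp only [mem_filter, mem_univ, true_and] at hτ
      simp [errS, hτ]
    · intro τ _ τ' _ h; exact congrArg Prod.snd h
    · rintro ⟨σ, τ⟩ hp
      simp only [errS, mem_filter, mem_univ, true_and, not_not, Nat.add_eq_zero_iff, card_eq_zero,
        Perm.support_eq_empty_iff] at hp
      obtain ⟨rfl, h⟩ := hp
      exact ⟨τ, by simpa using h, rfl⟩
    · intro τ _; rfl
  have h2 : ∀ τ : Fin N → Perm (Fin 3), sB 1 τ = ∅ →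
      cm (wr 1 τ) = mt (3 * N - 2 * #(sA 1 τ)) * m2 #(sA 1 τ) := by
    intro τ h
    have hc : Fintype.card (HE N) = 3 * N := by simp [HE, mul_comm]
    rw [← hc]
    refine cm_invol _ _ ?_ ?_
    · rintro ⟨v, i⟩
      have h1 : v ∉ sB 1 τ := by rw [h]; simp
      simp only [sB, Perm.one_apply, true_and, mem_filter, mem_univ] at h1
      change (v, τ v (τ v i)) = (v, i)
      rw [s3_invol _ h1]
    · rw [wr_support, h]; simp
  rw [h1, ← Finset.sum_fiberwise_of_maps_to (g := fun τ => sA 1 τ) (t := (univ : Finset (Fin N)).powerset)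
    (fun _ _ => by simp)]
  have h3 : ∀ A ∈ (univ : Finset (Fin N)).powerset,
      ∑ τ ∈ univ.filter (fun τ : Fin N → Perm (Fin 3) => sB 1 τ = ∅) with sA 1 τ = A, cm (wr 1 τ)
      = 3 ^ #A * (mt (3 * N - 2 * #A) * m2 #A) := by
    intro A _
    rw [← main_count, Finset.filter_filter]
    rw [Finset.sum_congr rfl (g := fun _ => mt (3 * N - 2 * #A) * m2 #A)]
    · rw [Finset.sum_const, smul_eq_mul]
    · intro τ hτ
      simp only [mem_filter, mem_univ, true_and] at hτ
      rw [h2 τ hτ.1, hτ.2]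
  rw [Finset.sum_congr rfl h3]
  have := Finset.sum_powerset_apply_card (fun a => 3 ^ a * (mt (3 * N - 2 * a) * m2 a))
    (x := (univ : Finset (Fin N)))
  rw [this]
  simp

/-- normalised main coefficient -/
noncomputable def Rc (n a : ℕ) : ℝ :=
  ((2 * n).descFactorial a : ℝ) * 3 ^ a * mt (3 * (2 * n) - 2 * a) / mt (3 * (2 * n))

theorem mt3_pos (n : ℕ) : (0 : ℝ) < mt (3 * (2 * n)) := by
  rw [show 3 * (2 * n) = 2 * (3 * n) by ring]; exact_mod_cast mt_pos _

theorem Rc_zero (n a : ℕ) (h : 2 * n < a) : Rc n a = 0 := by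
  unfold Rc; rw [Nat.descFactorial_of_lt h]; simp

theorem Rc_nonneg (n a : ℕ) : 0 ≤ Rc n a := by unfold Rc; positivity

theorem Rc_le (n a : ℕ) (hn : 0 < n) : Rc n a ≤ 12 ^ a := by
  by_cases h : 2 * n < a
  · rw [Rc_zero n a h]; positivity
  have hn' : (0 : ℝ) < 2 * n := by positivity
  have hx : ((√(2 * n : ℝ))⁻¹) ^ 2 * (2 * n) = 1 := by
    rw [inv_pow, Real.sq_sqrt hn'.le]; field_simp
  have := mt_bound n (2 * a) hn (by omega) (√(2 * n : ℝ))⁻¹ (by positivity) hx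
  unfold Rc
  rw [div_le_iff₀ (mt3_pos n)]
  have hd : ((2 * n).descFactorial a : ℝ) ≤ (2 * n) ^ a := by
    exact_mod_cast Nat.descFactorial_le_pow _ _
  calc _ ≤ (2 * n : ℝ) ^ a * 3 ^ a * (2 ^ (2 * a) * (√(2 * n : ℝ))⁻¹ ^ (2 * a) * mt (3 * (2 * n))) := by
        gcongr
    _ = ((√(2 * n : ℝ))⁻¹ ^ 2 * (2 * n)) ^ a * (3 ^ a * (2 ^ 2) ^ a) * mt (3 * (2 * n)) := by
        rw [pow_mul, pow_mul]
        rw [mul_pow ((√(2 * n : ℝ))⁻¹ ^ 2)]; ring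
    _ = _ := by rw [hx, one_pow, ← mul_pow]; norm_num

theorem Rc_succ (n a : ℕ) (h : a + 1 ≤ 2 * n) :
    Rc n (a + 1) = Rc n a * ((3 * (2 * n - a)) / (6 * n - 2 * a - 1)) := by
  unfold Rc
  obtain ⟨k, hk⟩ : ∃ k, 3 * n = k + a + 1 := ⟨3 * n - a - 1, by omega⟩
  have h1 : 3 * (2 * n) - 2 * (a + 1) = 2 * k := by omega
  have h2 : 3 * (2 * n) - 2 * a = 2 * (k + 1) := by omega
  rw [h1, h2, mt_succ, Nat.descFactorial_succ, pow_succ]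
  have hk' : (6 : ℝ) * n = 2 * (k + a + 1) := by
    have : (3 * n : ℝ) = k + a + 1 := by exact_mod_cast hk
    linarith
  have h3 : (6 : ℝ) * n - 2 * a - 1 = 2 * k + 1 := by rw [hk']; ring
  rw [h3]
  have h4 : (2 * (k : ℝ) + 1) ≠ 0 := by positivity
  have := (mt3_pos n).ne'
  push_cast [Nat.cast_sub (show a ≤ 2 * n by omega)]
  field_simp

open Filter Topology

theorem Rc_tendsto (a : ℕ) : Tendsto (fun n => Rc n a) atTop (𝓝 1) := by
  induction a with
  | zero =>
    have : (fun n => Rc n 0) = fun _ => 1 := by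
      funext n; unfold Rc; simp [(mt3_pos n).ne']
    rw [this]; exact tendsto_const_nhds
  | succ a ih =>
    have hinv : Tendsto (fun n : ℕ => ((n : ℝ))⁻¹) atTop (𝓝 0) :=
      tendsto_inv_atTop_zero.comp tendsto_natCast_atTop_atTop
    have h1 : Tendsto (fun n : ℕ => (3 * (2 - a * (n : ℝ)⁻¹)) / (6 - (2 * a + 1) * (n : ℝ)⁻¹)) atTop (𝓝 1) := by
      have : (3 * (2 - a * 0)) / (6 - (2 * a + 1) * 0) = (1 : ℝ) := by norm_num
      refine Eq.subst (motive := fun c => Tendsto _ atTop (𝓝 c)) this ?_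
      refine Tendsto.div ?_ ?_ (by norm_num)
      · exact (tendsto_const_nhds.sub (hinv.const_mul _)).const_mul _
      · exact tendsto_const_nhds.sub (hinv.const_mul _)
    have h2 := ih.mul h1
    rw [mul_one] at h2
    refine h2.congr' ?_
    filter_upwards [eventually_ge_atTop (a + 1)] with n hn
    rw [Rc_succ n a (by omega)]
    congr 1
    have hn0 : (n : ℝ) ≠ 0 := by
      have : 0 < n := by omega
      positivity
    rw [← mul_div_mul_right _ _ hn0]
    congr 1
    · field_simp
    · field_simp; ring
end CM

namespace CM
open Equiv Finset
open Filter Topology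

theorem reindex (N : ℕ) (g : ℕ → ℕ → ℝ) :
    ∑ a ∈ range (N + 1), ∑ i ∈ range (a + 1), (if 2 * i ≤ a then g i (a - 2 * i) else 0) =
      ∑ p ∈ range (N + 1) ×ˢ range (N + 1), if 2 * p.1 + p.2 ≤ N then g p.1 p.2 else 0 := by
  rw [Finset.sum_sigma', ← Finset.sum_filter, ← Finset.sum_filter]
  refine Finset.sum_bij' (fun x _ => (x.2, x.1 - 2 * x.2)) (fun p _ => ⟨2 * p.1 + p.2, p.1⟩) ?_ ?_ ?_ ?_ ?_
  · rintro ⟨a, i⟩ h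
    simp only [mem_filter, mem_sigma, mem_range, mem_product] at h ⊢
    omega
  · rintro ⟨i, k⟩ h
    simp only [mem_filter, mem_sigma, mem_range, mem_product] at h ⊢
    omega
  · rintro ⟨a, i⟩ h
    simp only [mem_filter, mem_sigma, mem_range] at h
    simp only [Sigma.mk.injEq, heq_eq_eq, and_true]
    omega
  · rintro ⟨i, k⟩ h
    simp
  · rintro ⟨a, i⟩ h; rfl

/-- summand -/
noncomputable def Fc (n : ℕ) (p : ℕ × ℕ) : ℝ :=
  Rc n (2 * p.1 + p.2) * (1 / (p.1.factorial : ℝ) * (1 / (p.2.factorial : ℝ)))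

theorem main_ratio (n : ℕ) :
    ((∑ p ∈ univ.filter (fun p => p ∉ errS (2 * n)), cm (wr p.1 p.2) : ℕ) : ℝ) / mt (3 * (2 * n))
      = ∑' p : ℕ × ℕ, Fc n p := by
  rw [main_sum]
  rw [tsum_eq_sum (s := range (2 * n + 1) ×ˢ range (2 * n + 1))]
  · have h1 : ∀ p ∈ range (2 * n + 1) ×ˢ range (2 * n + 1),
        Fc n p = if 2 * p.1 + p.2 ≤ 2 * n then Fc n (p.1, p.2) else 0 := by
      rintro ⟨i, k⟩ _
      split_ifs with h
      · rfl
      · unfold Fc; rw [Rc_zero n _ (by simpa using h)]; simp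
    rw [Finset.sum_congr rfl h1, ← reindex (2 * n) (fun i k => Fc n (i, k))]
    push_cast
    rw [Finset.sum_div]
    refine Finset.sum_congr rfl fun a ha => ?_
    rw [m2_eq, Finset.mul_sum, Finset.mul_sum, Finset.mul_sum, Finset.sum_div]
    refine Finset.sum_congr rfl fun i hi => ?_
    split_ifs with h
    · unfold Fc Rc
      simp only
      rw [show 2 * i + (a - 2 * i) = a by omega, Nat.descFactorial_eq_factorial_mul_choose]
      push_cast
      field_simp
    · simp
  · rintro ⟨i, k⟩ h
    simp only [mem_product, mem_range, not_and_or, not_lt] at h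
    unfold Fc; rw [Rc_zero n _ (by simp only; omega)]; simp

theorem tsum_tendsto : Tendsto (fun n => ∑' p : ℕ × ℕ, Fc n p) atTop (𝓝 (Real.exp 2)) := by
  have hs : ∀ x : ℝ, Summable fun i : ℕ => x ^ i / i.factorial := fun x =>
    Real.summable_pow_div_factorial x
  have hexp : HasSum (fun p : ℕ × ℕ => 1 / (p.1.factorial : ℝ) * (1 / (p.2.factorial : ℝ))) (Real.exp 2) := by
    have h1 : HasSum (fun i : ℕ => 1 / (i.factorial : ℝ)) (Real.exp 1) := by
      have := NormedSpace.expSeries_div_hasSum_exp (1 : ℝ)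
      rw [← Real.exp_eq_exp_ℝ] at this
      simpa using this
    have h2 := h1.mul h1 (h1.summable.mul_of_nonneg h1.summable (fun _ => by positivity)
      (fun _ => by positivity))
    rw [← Real.exp_add] at h2
    norm_num at h2 ⊢
    exact h2
  rw [← hexp.tsum_eq]
  refine tendsto_tsum_of_dominated_convergence
    (bound := fun p : ℕ × ℕ => (144 : ℝ) ^ p.1 / p.1.factorial * ((12 : ℝ) ^ p.2 / p.2.factorial)) ?_ ?_ ?_
  · exact (hs 144).mul_of_nonneg (hs 12) (fun _ => by positivity) (fun _ => by positivity)
  · intro p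
    have := (Rc_tendsto (2 * p.1 + p.2)).mul_const (1 / (p.1.factorial : ℝ) * (1 / (p.2.factorial : ℝ)))
    rw [one_mul] at this
    exact this
  · filter_upwards [eventually_gt_atTop 0] with n hn p
    unfold Fc
    have h0 := Rc_nonneg n (2 * p.1 + p.2)
    rw [Real.norm_of_nonneg (by positivity)]
    calc _ ≤ (12 : ℝ) ^ (2 * p.1 + p.2) * (1 / (p.1.factorial : ℝ) * (1 / (p.2.factorial : ℝ))) := by
          gcongr; exact Rc_le n _ hn
      _ = _ := by rw [pow_add, pow_mul]; norm_num; ring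

theorem ratio_tendsto : Tendsto (fun n : ℕ => (I (2 * n) : ℝ) * (6 ^ (2 * n) * (2 * n).factorial) /
    mt (3 * (2 * n))) atTop (𝓝 (Real.exp 2)) := by
  have hsplit : ∀ n : ℕ, (I (2 * n) : ℝ) * (6 ^ (2 * n) * (2 * n).factorial) / mt (3 * (2 * n)) =
      (∑' p : ℕ × ℕ, Fc n p) + (∑ p ∈ errS (2 * n), (cm (wr p.1 p.2) : ℝ)) / mt (3 * (2 * n)) := by
    intro n
    rw [← main_ratio, ← add_div]
    congr 1
    have := burnside (2 * n)
    have h2 : (I (2 * n) : ℝ) * (6 ^ (2 * n) * (2 * n).factorial) =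
        ∑ p : Perm (Fin (2 * n)) × (Fin (2 * n) → Perm (Fin 3)), (cm (wr p.1 p.2) : ℝ) := by
      exact_mod_cast this
    rw [h2, ← Finset.sum_filter_add_sum_filter_not univ (fun p => p ∈ errS (2 * n)), add_comm]
    push_cast
    congr 1
    simp
  have herr : Tendsto (fun n : ℕ => (∑ p ∈ errS (2 * n), (cm (wr p.1 p.2) : ℝ)) / mt (3 * (2 * n)))
      atTop (𝓝 0) := by
    obtain ⟨C, hC⟩ : ∃ C : ℝ, C = 21233664 := ⟨_, rfl⟩
    have hy : Tendsto (fun n : ℕ => (√√(2 * n : ℝ))⁻¹) atTop (𝓝 0) := by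
      refine tendsto_inv_atTop_zero.comp ?_
      refine Real.tendsto_sqrt_atTop.comp (Real.tendsto_sqrt_atTop.comp ?_)
      exact Tendsto.const_mul_atTop (by norm_num) tendsto_natCast_atTop_atTop
    have hCp : 0 < C := by rw [hC]; norm_num
    have hz : ∀ᶠ n : ℕ in atTop, 2 * C * (√√(2 * n : ℝ))⁻¹ ≤ 1 / 2 := by
      have := hy.const_mul (2 * C)
      rw [mul_zero] at this
      exact this.eventually_le_const (by norm_num)
    have hup := hy.const_mul (1024 * C * Real.exp (2 * C ^ 2))
    rw [mul_zero] at hup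
    refine tendsto_of_tendsto_of_tendsto_of_le_of_le' tendsto_const_nhds hup ?_ ?_
    · exact Eventually.of_forall fun n => by positivity
    · filter_upwards [hz, eventually_gt_atTop 0] with n hz hn
      rw [div_le_iff₀ (mt3_pos n)]
      have hn' : (0 : ℝ) < 2 * n := by positivity
      refine err_bound C hC n hn _ (by positivity) hz ?_
      rw [inv_pow, show 4 = 2 * 2 from rfl, pow_mul, Real.sq_sqrt (by positivity),
        Real.sq_sqrt hn'.le]
      field_simp
  have := tsum_tendsto.add herr
  rw [add_zero] at this
  exact this.congr fun n => (hsplit n).symm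
end CM

namespace CM
open Filter Topology

/-- Stirling approximation -/
noncomputable def stf (k : ℕ) : ℝ := √(2 * k * Real.pi) * (k / Real.exp 1) ^ k

theorem stf_pos (k : ℕ) (hk : 0 < k) : 0 < stf k := by
  have := Real.pi_pos
  unfold stf; positivity

theorem st_ratio : Tendsto (fun k : ℕ => (k.factorial : ℝ) / stf k) atTop (𝓝 1) := by
  have h := Stirling.factorial_isEquivalent_stirling
  rw [Asymptotics.isEquivalent_iff_tendsto_one] at h
  · exact h
  · filter_upwards [eventually_gt_atTop 0] with k hk
    exact (stf_pos k hk).ne'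

theorem stf_identity (n : ℕ) (hn : 0 < n) :
    stf (6 * n) * √(Real.pi * (2 * n)) * ((4 * Real.exp 1) / (3 * (2 * n))) ^ n =
      2 ^ (3 * n) * stf (3 * n) * (6 ^ (2 * n) * stf (2 * n)) := by
  have hn' : (0 : ℝ) < n := by exact_mod_cast hn
  have hpi := Real.pi_pos
  unfold stf
  push_cast
  have h1 : √(2 * (6 * n) * Real.pi) * √(Real.pi * (2 * n)) =
      √(2 * (3 * n) * Real.pi) * √(2 * (2 * n) * Real.pi) := by
    rw [← Real.sqrt_mul (by positivity), ← Real.sqrt_mul (by positivity)]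
    congr 1; ring
  have h2 : ((6 : ℝ) * n / Real.exp 1) ^ (6 * n) * ((4 * Real.exp 1) / (3 * (2 * n))) ^ n =
      2 ^ (3 * n) * (3 * n / Real.exp 1) ^ (3 * n) * (6 ^ (2 * n) * (2 * n / Real.exp 1) ^ (2 * n)) := by
    simp only [pow_mul, ← mul_pow]
    congr 1
    have := Real.exp_pos 1
    field_simp
    norm_num
  linear_combination (((6 : ℝ) * n / Real.exp 1) ^ (6 * n) * ((4 * Real.exp 1) / (3 * (2 * n))) ^ n) * h1
    + (√(2 * (3 * n) * Real.pi) * √(2 * (2 * n) * Real.pi)) * h2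

theorem stir_tendsto : Tendsto (fun n : ℕ => (mt (3 * (2 * n)) : ℝ) / (6 ^ (2 * n) * (2 * n).factorial) *
    √(Real.pi * (2 * n)) * ((4 * Real.exp 1) / (3 * (2 * n))) ^ n) atTop (𝓝 1) := by
  have hc : ∀ c : ℕ, 0 < c → Tendsto (fun n : ℕ => ((c * n).factorial : ℝ) / stf (c * n)) atTop (𝓝 1) := by
    intro c hc
    exact st_ratio.comp (tendsto_id.const_mul_atTop' hc)
  have h := (hc 6 (by norm_num)).div ((hc 3 (by norm_num)).mul (hc 2 (by norm_num))) (by norm_num)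
  rw [mul_one, div_one] at h
  refine h.congr' ?_
  filter_upwards [eventually_gt_atTop 0] with n hn
  have h6 := stf_pos (6 * n) (by omega)
  have h3 := stf_pos (3 * n) (by omega)
  have h2 := stf_pos (2 * n) (by omega)
  have hid := stf_identity n hn
  have hm : (mt (3 * (2 * n)) : ℝ) * (2 ^ (3 * n) * (3 * n).factorial) = (6 * n).factorial := by
    have := mt_even (3 * n)
    rw [show 2 * (3 * n) = 3 * (2 * n) by ring] at this
    rw [show 6 * n = 3 * (2 * n) by ring]
    exact_mod_cast this
  simp only [Pi.mul_apply, Pi.div_apply]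
  rw [← hm]
  set Q := √(Real.pi * (2 * n)) * ((4 * Real.exp 1) / (3 * (2 * n))) ^ n with hQ
  rw [mul_assoc, ← hQ]
  rw [mul_assoc, ← hQ] at hid
  have f3 : ((3 * n).factorial : ℝ) ≠ 0 := by positivity
  have f2 : ((2 * n).factorial : ℝ) ≠ 0 := by positivity
  field_simp
  linear_combination (-(mt (3 * (2 * n)) : ℝ)) * hid

theorem final_even : Tendsto (fun n : ℕ => (I (2 * n) : ℝ) * √(Real.pi * (2 * n)) *
    ((4 * Real.exp 1) / (3 * (2 * n))) ^ n * Real.exp (-2)) atTop (𝓝 1) := by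
  have h := (ratio_tendsto.mul stir_tendsto).mul_const (Real.exp (-2))
  rw [mul_one, ← Real.exp_add, add_neg_cancel, Real.exp_zero] at h
  refine h.congr fun n => ?_
  have := (mt3_pos n).ne'
  have f2 : ((2 * n).factorial : ℝ) ≠ 0 := by positivity
  field_simp
end CM

/-- Theorem (Wormald): `I N ∼ (e²/√(πN)) (3N/(4e))^{N/2}` as `N → ∞` through even `N`. -/
theorem cubic_multigraph_count_asymptotics :
    Tendsto
      (fun N : ℕ => (I N : ℝ) * Real.sqrt (π * N) *
        ((4 * Real.exp 1) / (3 * (N : ℝ))) ^ ((N : ℝ) / 2) * Real.exp (-2))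
      (atTop ⊓ 𝓟 {N : ℕ | Even N}) (𝓝 1) := by
  have h := CM.final_even
  rw [Filter.tendsto_def] at h ⊢
  intro s hs
  have h1 := h s hs
  rw [Filter.mem_inf_principal]
  rw [Filter.mem_atTop_sets] at h1 ⊢
  obtain ⟨n0, hn0⟩ := h1
  refine ⟨2 * n0, fun N hN hE => ?_⟩
  obtain ⟨n, rfl⟩ := hE
  have h2 := hn0 n (by omega)
  rw [← two_mul]
  simp only [Set.mem_preimage] at h2 ⊢
  convert h2 using 1
  push_cast
  rw [show (2 * (n : ℝ)) / 2 = (n : ℝ) by ring, Real.rpow_natCast]
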